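/- arXiv:2307.15648 — 3 statements merged into one kernel-verified Lean document; each statement's English description precedes it below -/
import Mathlib

section
/- Let q be an odd prime power, m ≥ 2, and Q a nondegenerate quadratic form of type ε = ±1 on V = F_q^{2m}. Let D = {x ∈ V : x ≠ 0, Q(x) = 0}. Then D is a regular partial difference set in the additive group of V with parameters v = q^{2m}, k = (q^m − ε)(q^{m−1} + ε), λ = q(q^{m−1} − ε)(q^{m−2} + ε) + q − 2, μ = q^{m−1}(q^{m−1} + ε). -/
open Finset

/-- Number of ways to write `x` as `d₁ − d₂` with `d₁, d₂ ∈ D`. -/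
def pdsCountAdd {V : Type*} [AddGroup V] [Fintype V] [DecidableEq V]
    (D : Finset V) (x : V) : ℕ :=
  ((D ×ˢ D).filter (fun p => p.1 - p.2 = x)).card

/-- `D` is a regular `(v,k,λ,μ)`-partial difference set in the additive group `V`. -/
def IsRegularAddPDS {V : Type*} [AddGroup V] [Fintype V] [DecidableEq V]
    (D : Finset V) (v k l m : ℤ) : Prop :=
  (Fintype.card V : ℤ) = v ∧ (D.card : ℤ) = k ∧ (0 : V) ∉ D ∧ (∀ d ∈ D, -d ∈ D) ∧
  (∀ x ∈ D, (pdsCountAdd D x : ℤ) = l) ∧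
  (∀ x : V, x ≠ 0 → x ∉ D → (pdsCountAdd D x : ℤ) = m)

/-- The polar form `β(x,y) = Q(x+y) − Q(x) − Q(y)` of `Q`. -/
def polarQ {F V : Type*} [Field F] [AddCommGroup V] (Q : V → F) (x y : V) : F :=
  Q (x + y) - Q x - Q y

/-- The standard hyperbolic quadratic form `x₁x₂ + x₃x₄ + ⋯ + x_{2m−1}x_{2m}`. -/
def hypForm (F : Type*) [Field F] (m : ℕ) (x : Fin (2 * m) → F) : F :=
  ∑ i : Fin m, x ⟨2 * i.1, by have := i.2; omega⟩ * x ⟨2 * i.1 + 1, by have := i.2; omega⟩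

/-- The standard elliptic quadratic form
`x₁x₂ + ⋯ + x_{2m−3}x_{2m−2} + x_{2m−1}² + b·x_{2m}²`. -/
def ellForm (F : Type*) [Field F] (m : ℕ) (b : F) (x : Fin (2 * m) → F) : F :=
  if h : 1 ≤ m then
    (∑ i : Fin (m - 1),
        x ⟨2 * i.1, by have := i.2; omega⟩ * x ⟨2 * i.1 + 1, by have := i.2; omega⟩)
      + x ⟨2 * m - 2, by omega⟩ ^ 2 + b * x ⟨2 * m - 1, by omega⟩ ^ 2
  else 0

/-!
Let `q = |F|`, `h = ε q ^ (m - 1)`, and let `ψ` be a nontrivial additive character of `F`. The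
characters of `V` are `y ↦ ψ (β x y)`, and a symmetric set avoiding `0` whose nontrivial character
sums take only two values is a partial difference set, by Fourier inversion. Detecting `Q y = 0` by
averaging `ψ (t * Q y)` over `t` and completing the square, the character sums of the singular
vectors reduce to the sums `∑ y, ψ (t * Q y)` with `t ≠ 0`, and take two values if these all agree.
No Gauss sums are needed to evaluate them: each has modulus `|V| ^ (1 / 2) = q * |h|`, while the
number of zeros of `Q` shows that the `q - 1` of them add up to `(q - 1) * (q * h)`, which forces
each to equal `q * h`. The zeros are counted by splitting `Q` into a hyperbolic and an anisotropic
form.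
-/

section CharacterCriterion

variable {G : Type*} [AddCommGroup G] [Fintype G]

theorem card_mul_eq_sum_of_sum_mul_addChar_eq_zero {f : G → ℂ}
    (hf : ∀ χ : AddChar G ℂ, χ ≠ 1 → ∑ x, f x * χ x = 0) (z : G) :
    Fintype.card G * f z = ∑ x, f x := by
  classical
  calc (Fintype.card G : ℂ) * f z
      = ∑ x, f x * ∑ χ : AddChar G ℂ, χ (x - z) := by
        simp [AddChar.sum_apply_eq_ite, sub_eq_zero, mul_comm]
    _ = ∑ χ : AddChar G ℂ, χ (-z) * ∑ x, f x * χ x := by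
        simp only [mul_sum, sub_eq_add_neg, AddChar.map_add_eq_mul]
        rw [sum_comm]
        exact sum_congr rfl fun χ _ => sum_congr rfl fun x _ => by ring
    _ = ∑ x, f x := by
        rw [sum_eq_single 1 (fun χ _ hχ => by rw [hf χ hχ, mul_zero]) (by simp)]
        simp

theorem eq_of_sum_mul_addChar_eq_zero {f : G → ℂ}
    (hf : ∀ χ : AddChar G ℂ, χ ≠ 1 → ∑ x, f x * χ x = 0) (x y : G) : f x = f y := by
  have hG : (Fintype.card G : ℂ) ≠ 0 := Nat.cast_ne_zero.2 Fintype.card_ne_zero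
  apply mul_left_cancel₀ hG
  rw [card_mul_eq_sum_of_sum_mul_addChar_eq_zero hf, card_mul_eq_sum_of_sum_mul_addChar_eq_zero hf]

variable [DecidableEq G]

theorem pdsCountAdd_zero (D : Finset G) : pdsCountAdd D 0 = #D := by
  have hdiag : {p ∈ D ×ˢ D | p.1 - p.2 = 0} = D.diag := by
    ext p; simp only [mem_filter, mem_product, mem_diag, sub_eq_zero]; grind
  rw [pdsCountAdd, hdiag, diag_card]

theorem sum_pdsCountAdd_mul_addChar {D : Finset G} (hneg : ∀ d ∈ D, -d ∈ D) (χ : AddChar G ℂ) :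
    ∑ x, (pdsCountAdd D x : ℂ) * χ x = (∑ d ∈ D, χ d) ^ 2 := by
  have hsymm : ∑ d ∈ D, χ (-d) = ∑ d ∈ D, χ d :=
    sum_nbij' (-·) (-·) hneg hneg (by simp) (by simp) (by simp)
  calc ∑ x, (pdsCountAdd D x : ℂ) * χ x
      = ∑ x, ∑ p ∈ D ×ˢ D with p.1 - p.2 = x, χ (p.1 - p.2) := by
        refine sum_congr rfl fun x _ => ?_
        rw [sum_congr rfl fun p hp => by rw [(mem_filter.1 hp).2], sum_const, nsmul_eq_mul,
          pdsCountAdd]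
    _ = ∑ a ∈ D, ∑ b ∈ D, χ (a - b) := by
        rw [sum_fiberwise, sum_product]
    _ = (∑ d ∈ D, χ d) ^ 2 := by
        simp only [sub_eq_add_neg, AddChar.map_add_eq_mul]
        rw [← sum_mul_sum, hsymm, sq]

theorem isRegularAddPDS_of_sum_addChar_eq_or_eq {D : Finset G} (h0 : 0 ∉ D)
    (hneg : ∀ d ∈ D, -d ∈ D) (r s : ℤ)
    (hD : ∀ χ : AddChar G ℂ, χ ≠ 1 → ∑ d ∈ D, χ d = r ∨ ∑ d ∈ D, χ d = s) :
    IsRegularAddPDS D (Fintype.card G) #D (#D + r * s + (r + s)) (#D + r * s) := by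
  -- By the two-value hypothesis, all nontrivial Fourier coefficients of `f` vanish:
  -- they are `(X - r) * (X - s)` at `X = ∑ d ∈ D, χ d`.
  let f (x : G) : ℂ :=
    pdsCountAdd D x - (r + s) * (if x ∈ D then 1 else 0) + r * s * (if x = 0 then 1 else 0)
  have hf (x : G) : f x = #D + r * s := by
    rw [eq_of_sum_mul_addChar_eq_zero (f := f) (fun χ hχ => ?_) x 0]
    · simp [f, pdsCountAdd_zero, h0]
    · have hfourier : ∑ x, f x * χ x = (∑ d ∈ D, χ d - r) * (∑ d ∈ D, χ d - s) := by
        simp only [f, add_mul, sub_mul, sum_add_distrib, sum_sub_distrib, mul_assoc, ← mul_sum,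
          sum_pdsCountAdd_mul_addChar hneg, ite_mul, one_mul, zero_mul, sum_ite_mem, univ_inter,
          sum_ite_eq', mem_univ, if_true, AddChar.map_zero_eq_one]
        ring
      rw [hfourier]
      rcases hD χ hχ with h | h <;> simp [h]
  refine ⟨rfl, rfl, h0, hneg, fun x hx => ?_, fun x hx hxD => ?_⟩
  · have hfx := hf x
    have hx0 : x ≠ 0 := ne_of_mem_of_not_mem hx h0
    simp only [f, hx, hx0, if_true, if_false] at hfx
    have : (pdsCountAdd D x : ℂ) = #D + r * s + (r + s) := by linear_combination hfx
    exact_mod_cast this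
  · have hfx := hf x
    simp only [f, hx, hxD, if_false] at hfx
    have : (pdsCountAdd D x : ℂ) = #D + r * s := by linear_combination hfx
    exact_mod_cast this

end CharacterCriterion

theorem eq_of_norm_le_of_sum_eq_card_smul {ι E : Type*} [NormedAddCommGroup E]
    [InnerProductSpace ℝ E] {s : Finset ι} {z : ι → E} {g : E} (hz : ∀ i ∈ s, ‖z i‖ ≤ ‖g‖)
    (hsum : ∑ i ∈ s, z i = #s • g) : ∀ i ∈ s, z i = g := by
  have hdist : ∀ i ∈ s, ‖z i - g‖ ^ 2 ≤ 2 * (‖g‖ ^ 2 - inner ℝ (z i) g) := fun i hi => by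
    have := pow_le_pow_left₀ (norm_nonneg _) (hz i hi) 2
    rw [norm_sub_sq_real]
    linarith
  have hinner : ∑ i ∈ s, inner ℝ (z i) g = #s * ‖g‖ ^ 2 := by
    rw [← sum_inner, hsum, ← Nat.cast_smul_eq_nsmul ℝ, real_inner_smul_left,
      real_inner_self_eq_norm_sq]
  have hle : ∑ i ∈ s, ‖z i - g‖ ^ 2 ≤ 0 := by
    refine (sum_le_sum hdist).trans_eq ?_
    rw [← mul_sum, sum_sub_distrib, hinner, sum_const, nsmul_eq_mul, sub_self, mul_zero]
  have hzero := (sum_eq_zero_iff_of_nonneg fun i _ => sq_nonneg ‖z i - g‖).1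
    (hle.antisymm (sum_nonneg fun i _ => sq_nonneg _))
  exact fun i hi => sub_eq_zero.1 (norm_eq_zero.1 (pow_eq_zero_iff two_ne_zero |>.1 (hzero i hi)))

section PairingCharacters

variable {F V W : Type*} [Field F] [AddCommGroup V] [Module F V] [AddCommGroup W] [Module F W]
  {ψ : AddChar F ℂ}

/-- The additive character `y ↦ ψ (B x y)` of `W` attached to a vector `x` of `V` by a bilinear
pairing `B`; for primitive `ψ` and nondegenerate `B` this identifies `V` with the dual group of
`W`. -/
def pairingChar (ψ : AddChar F ℂ) (B : V →ₗ[F] W →ₗ[F] F) (x : V) : AddChar W ℂ :=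
  ψ.compAddMonoidHom (B x).toAddMonoidHom

@[simp]
theorem pairingChar_apply (B : V →ₗ[F] W →ₗ[F] F) (x : V) (y : W) :
    pairingChar ψ B x y = ψ (B x y) := rfl

theorem pairingChar_zero (B : V →ₗ[F] W →ₗ[F] F) : pairingChar ψ B 0 = 1 := by
  ext; simp

variable {B : V →ₗ[F] W →ₗ[F] F}

theorem pairingChar_ne_one (hψ : ψ.IsPrimitive) (hB : B.SeparatingLeft) {x : V} (hx : x ≠ 0) :
    pairingChar ψ B x ≠ 1 := by
  obtain ⟨y, hy⟩ : ∃ y, B x y ≠ 0 := by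
    contrapose! hx
    exact hB x hx
  obtain ⟨a, ha⟩ := AddChar.ne_one_iff.1 (hψ hy)
  refine AddChar.ne_one_iff.2 ⟨a • y, ?_⟩
  simpa [mul_comm a] using ha

theorem pairingChar_injective (hψ : ψ.IsPrimitive) (hB : B.SeparatingLeft) :
    Function.Injective (pairingChar ψ B) := fun x x' h => by
  by_contra hne
  refine pairingChar_ne_one hψ hB (sub_ne_zero.2 hne) (DFunLike.ext _ _ fun y => ?_)
  have hy : ψ (B x y) = ψ (B x' y) := DFunLike.congr_fun h y
  rw [pairingChar_apply, map_sub, LinearMap.sub_apply, AddChar.map_sub_eq_div, hy,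
    div_self (ψ.val_isUnit _).ne_zero, AddChar.one_apply]

theorem pairingChar_surjective [Finite V] {B : LinearMap.BilinForm F V} (hψ : ψ.IsPrimitive)
    (hB : B.SeparatingLeft) : Function.Surjective (pairingChar ψ B) := by
  have := Fintype.ofFinite V
  exact ((Fintype.bijective_iff_injective_and_card _).2
    ⟨pairingChar_injective hψ hB, AddChar.card_eq.symm⟩).surjective

theorem sum_addChar_pairing [Fintype W] [DecidableEq V] (hψ : ψ.IsPrimitive)
    (hB : B.SeparatingLeft) (x : V) :
    ∑ y, ψ (B x y) = if x = 0 then (Fintype.card W : ℂ) else 0 := by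
  split_ifs with hx
  · simp [hx]
  · exact AddChar.sum_eq_zero_of_ne_one (pairingChar_ne_one hψ hB hx)

end PairingCharacters

section QuadraticExponentialSums

variable {F V : Type*} [Field F] [AddCommGroup V] [Module F V] [Fintype V] {ψ : AddChar F ℂ}
  {Q : QuadraticForm F V}

theorem norm_sq_sum_addChar_mul_quadraticForm [Finite F] (hψ : ψ.IsPrimitive)
    (hQ : Q.polarBilin.SeparatingLeft) {t : F} (ht : t ≠ 0) :
    ‖∑ y, ψ (t * Q y)‖ ^ 2 = Fintype.card V := by
  classical
  have hpolar (x z : V) : t * Q (x + z) + -(t * Q z) = t * Q x + Q.polarBilin (t • x) z := by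
    rw [QuadraticMap.map_add Q, map_smul, LinearMap.smul_apply, QuadraticMap.polarBilin_apply_apply,
      smul_eq_mul]
    ring
  have hsum : (∑ y, ψ (t * Q y)) * starRingEnd ℂ (∑ y, ψ (t * Q y)) = Fintype.card V :=
    calc (∑ y, ψ (t * Q y)) * starRingEnd ℂ (∑ y, ψ (t * Q y))
        = ∑ z, ∑ y, ψ (t * Q y + -(t * Q z)) := by
          simp only [map_sum, ← AddChar.map_neg_eq_conj, sum_mul_sum, AddChar.map_add_eq_mul]
          exact sum_comm
      _ = ∑ z, ∑ x, ψ (t * Q (x + z) + -(t * Q z)) :=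
          sum_congr rfl fun z _ => (Equiv.sum_comp (Equiv.addRight z) _).symm
      _ = ∑ x, ψ (t * Q x) * ∑ z, ψ (Q.polarBilin (t • x) z) := by
          rw [sum_comm]
          simp only [hpolar, AddChar.map_add_eq_mul, mul_sum]
      _ = Fintype.card V := by
          simp only [sum_addChar_pairing hψ hQ, smul_eq_zero, ht, false_or, mul_ite, mul_zero]
          simp
  rw [Complex.mul_conj'] at hsum
  exact_mod_cast hsum

theorem sum_addChar_mul_add_polar {t : F} (ht : t ≠ 0) (x : V) :
    ∑ y, ψ (t * Q y + QuadraticMap.polar Q x y) = ψ (t⁻¹ * -Q x) * ∑ y, ψ (t * Q y) := by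
  -- Complete the square: `t * Q y + polar Q x y = t * Q (t⁻¹ • x + y) - t⁻¹ * Q x`.
  rw [mul_sum, ← Equiv.sum_comp (Equiv.addLeft (t⁻¹ • x)) fun y => ψ (t⁻¹ * -Q x) * ψ (t * Q y)]
  refine sum_congr rfl fun y _ => ?_
  rw [← AddChar.map_add_eq_mul, Equiv.coe_addLeft, QuadraticMap.map_add Q,
    QuadraticMap.map_smul, QuadraticMap.polar_smul_left, smul_eq_mul, smul_eq_mul]
  congr 1
  field_simp
  ring

variable [Fintype F] [DecidableEq F]

theorem sum_erase_zero_addChar_mul (hψ : ψ.IsPrimitive) (a : F) :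
    ∑ t ∈ univ.erase 0, ψ (t * a) = (if a = 0 then (Fintype.card F : ℂ) else 0) - 1 := by
  have h := AddChar.sum_mulShift a hψ
  rw [← add_sum_erase _ _ (mem_univ 0), zero_mul, AddChar.map_zero_eq_one] at h
  rw [eq_sub_iff_add_eq', h]
  push_cast
  rfl

theorem sum_erase_zero_sum_addChar_mul {ι : Type*} [Fintype ι] (hψ : ψ.IsPrimitive) (f : ι → F) :
    ∑ t ∈ univ.erase 0, ∑ i, ψ (t * f i) =
      Fintype.card F * #{i | f i = 0} - Fintype.card ι := by
  rw [sum_comm]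
  simp only [sum_erase_zero_addChar_mul hψ, sum_sub_distrib, ← sum_filter, sum_const, nsmul_eq_mul]
  simp [mul_comm]

theorem sum_addChar_mul_quadraticForm (hψ : ψ.IsPrimitive) (hQ : Q.polarBilin.SeparatingLeft)
    {h : ℤ} (hV : (Fintype.card V : ℤ) = (Fintype.card F * h) ^ 2)
    (hzero : (#{x | Q x = 0} : ℤ) = Fintype.card F * h ^ 2 + (Fintype.card F - 1) * h)
    {t : F} (ht : t ≠ 0) : ∑ y, ψ (t * Q y) = Fintype.card F * h := by
  have hnorm : ∀ t ∈ univ.erase (0 : F), ‖∑ y, ψ (t * Q y)‖ ≤ ‖(Fintype.card F * h : ℂ)‖ := by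
    intro t ht
    have hsq : ‖∑ y, ψ (t * Q y)‖ ^ 2 = ‖(Fintype.card F * h : ℂ)‖ ^ 2 := by
      rw [norm_sq_sum_addChar_mul_quadraticForm hψ hQ (ne_of_mem_erase ht)]
      have : ((Fintype.card V : ℤ) : ℝ) = ((Fintype.card F * h) ^ 2 : ℤ) := by rw [hV]
      push_cast at this
      rw [norm_mul, Complex.norm_natCast, Complex.norm_intCast, mul_pow, sq_abs, this, mul_pow]
    exact ((sq_eq_sq₀ (norm_nonneg _) (norm_nonneg _)).1 hsq).le
  refine eq_of_norm_le_of_sum_eq_card_smul hnorm ?_ t (mem_erase.2 ⟨ht, mem_univ t⟩)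
  have hV' : (Fintype.card V : ℂ) = (Fintype.card F * h) ^ 2 := by exact_mod_cast hV
  have hzero' : (#{x | Q x = 0} : ℂ) = Fintype.card F * h ^ 2 + (Fintype.card F - 1) * h := by
    exact_mod_cast hzero
  rw [sum_erase_zero_sum_addChar_mul hψ, hV', hzero', card_erase_of_mem (mem_univ _), card_univ,
    nsmul_eq_mul, Nat.cast_pred Fintype.card_pos]
  ring

theorem card_mul_sum_zeros_addChar_polar (hψ : ψ.IsPrimitive) (hQ : Q.polarBilin.SeparatingLeft)
    {g : ℂ} (hg : ∀ t : F, t ≠ 0 → ∑ y, ψ (t * Q y) = g) {x : V} (hx : x ≠ 0) :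
    Fintype.card F * ∑ y with Q y = 0, ψ (QuadraticMap.polar Q x y) =
      g * ((if Q x = 0 then (Fintype.card F : ℂ) else 0) - 1) := by
  classical
  have hlin : ∑ y, ψ (QuadraticMap.polar Q x y) = 0 := by
    simpa [hx] using sum_addChar_pairing hψ hQ x
  calc (Fintype.card F : ℂ) * ∑ y with Q y = 0, ψ (QuadraticMap.polar Q x y)
      = ∑ y, (∑ t, ψ (t * Q y)) * ψ (QuadraticMap.polar Q x y) := by
        rw [sum_filter, mul_sum]
        refine sum_congr rfl fun y _ => ?_
        rw [AddChar.sum_mulShift _ hψ]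
        split_ifs <;> simp
    _ = ∑ t, ∑ y, ψ (t * Q y + QuadraticMap.polar Q x y) := by
        simp only [sum_mul, AddChar.map_add_eq_mul]
        exact sum_comm
    _ = ∑ t ∈ univ.erase 0, ∑ y, ψ (t * Q y + QuadraticMap.polar Q x y) := by
        rw [← add_sum_erase _ _ (mem_univ 0)]
        simp [hlin]
    _ = ∑ t ∈ univ.erase 0, ψ (t⁻¹ * -Q x) * g :=
        sum_congr rfl fun t ht => by
          rw [sum_addChar_mul_add_polar (ne_of_mem_erase ht), hg t (ne_of_mem_erase ht)]
    _ = ∑ t ∈ univ.erase 0, ψ (t * -Q x) * g :=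
        sum_nbij' (·⁻¹) (·⁻¹) (by simp) (by simp) (by simp) (by simp) (by simp)
    _ = g * ((if Q x = 0 then (Fintype.card F : ℂ) else 0) - 1) := by
        rw [← sum_mul, sum_erase_zero_addChar_mul hψ, mul_comm]
        simp only [neg_eq_zero]

end QuadraticExponentialSums

section SingularVectors

variable {F V : Type*} [Field F] [AddCommGroup V] [Module F V] [Fintype V]
  [DecidableEq F] [DecidableEq V]

/-- The nonzero singular vectors of a quadratic form `Q`, i.e. the nonzero zeros of `Q`. -/
def singularVectors (Q : QuadraticForm F V) : Finset V := {x | x ≠ 0 ∧ Q x = 0}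

variable {Q : QuadraticForm F V}

theorem insert_zero_singularVectors :
    insert 0 (singularVectors Q) = ({x | Q x = 0} : Finset V) := by
  ext x
  by_cases hx : x = 0 <;> simp [singularVectors, hx]

theorem zero_notMem_singularVectors : 0 ∉ singularVectors Q := by
  simp [singularVectors]

theorem card_singularVectors_add_one : #(singularVectors Q) + 1 = #{x | Q x = 0} := by
  rw [← insert_zero_singularVectors, card_insert_of_notMem zero_notMem_singularVectors]

theorem sum_singularVectors_addChar (χ : AddChar V ℂ) :
    ∑ d ∈ singularVectors Q, χ d = ∑ d with Q d = 0, χ d - 1 := by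
  rw [← insert_zero_singularVectors, sum_insert zero_notMem_singularVectors,
    AddChar.map_zero_eq_one, add_sub_cancel_left]

variable [Fintype F]

theorem sum_singularVectors_addChar_eq_or_eq (hQ : Q.polarBilin.SeparatingLeft) {h : ℤ}
    (hV : (Fintype.card V : ℤ) = (Fintype.card F * h) ^ 2)
    (hzero : (#{x | Q x = 0} : ℤ) = Fintype.card F * h ^ 2 + (Fintype.card F - 1) * h)
    {χ : AddChar V ℂ} (hχ : χ ≠ 1) :
    ∑ d ∈ singularVectors Q, χ d = ((Fintype.card F - 1) * h - 1 : ℤ) ∨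
      ∑ d ∈ singularVectors Q, χ d = (-h - 1 : ℤ) := by
  have hψ := AddChar.FiniteField.primitiveChar_to_Complex_isPrimitive F
  set ψ := AddChar.FiniteField.primitiveChar_to_Complex F
  obtain ⟨x, rfl⟩ := pairingChar_surjective hψ hQ χ
  have hx : x ≠ 0 := by
    rintro rfl
    exact hχ (pairingChar_zero _)
  have hq : (Fintype.card F : ℂ) ≠ 0 := Nat.cast_ne_zero.2 Fintype.card_ne_zero
  have hsum := card_mul_sum_zeros_addChar_polar hψ hQ
    (fun t ht => sum_addChar_mul_quadraticForm hψ hQ hV hzero ht) hx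
  rw [mul_assoc, mul_right_inj' hq] at hsum
  rw [sum_singularVectors_addChar]
  simp only [pairingChar_apply, QuadraticMap.polarBilin_apply_apply, hsum]
  by_cases hQx : Q x = 0
  · left
    rw [if_pos hQx]
    push_cast
    ring
  · right
    rw [if_neg hQx]
    push_cast
    ring

theorem isRegularAddPDS_singularVectors (hQ : Q.polarBilin.SeparatingLeft) {h : ℤ}
    (hV : (Fintype.card V : ℤ) = (Fintype.card F * h) ^ 2)
    (hzero : (#{x | Q x = 0} : ℤ) = Fintype.card F * h ^ 2 + (Fintype.card F - 1) * h) :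
    IsRegularAddPDS (singularVectors Q) ((Fintype.card F * h) ^ 2)
      ((Fintype.card F * h - 1) * (h + 1)) (h ^ 2 + (Fintype.card F - 1) * h - 2)
      (h * (h + 1)) := by
  have hcard : (#(singularVectors Q) : ℤ) = (Fintype.card F * h - 1) * (h + 1) := by
    have := card_singularVectors_add_one (Q := Q)
    zify at this
    linear_combination this + hzero
  have hneg : ∀ d ∈ singularVectors Q, -d ∈ singularVectors Q := by
    simp [singularVectors]
  convert isRegularAddPDS_of_sum_addChar_eq_or_eq zero_notMem_singularVectors hneg _ _
    fun χ => sum_singularVectors_addChar_eq_or_eq hQ hV hzero using 1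
  · exact hV.symm
  · exact hcard.symm
  · rw [hcard]; ring
  · rw [hcard]; ring

end SingularVectors

section WittType

variable {F M V W : Type*} [Field F] [AddCommGroup M] [Module F M] [AddCommGroup V] [Module F V]
  [AddCommGroup W] [Module F W]

theorem separatingLeft_dualEval : (Module.Dual.eval F M).SeparatingLeft := fun x hx =>
  (Module.forall_dual_apply_eq_zero_iff F x).1 hx

theorem sum_addChar_mul_dualProd [Fintype M] [Fintype (Module.Dual F M)] {ψ : AddChar F ℂ}
    (hψ : ψ.IsPrimitive) {t : F} (ht : t ≠ 0) :
    ∑ p, ψ (t * QuadraticForm.dualProd F M p) = Fintype.card (Module.Dual F M) := by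
  classical
  calc ∑ p, ψ (t * QuadraticForm.dualProd F M p)
      = ∑ x : M, ∑ φ : Module.Dual F M, ψ (Module.Dual.eval F M (t • x) φ) := by
        simp [Fintype.sum_prod_type_right]
    _ = Fintype.card (Module.Dual F M) := by
        simp only [sum_addChar_pairing hψ separatingLeft_dualEval, smul_eq_zero, ht, false_or,
          sum_ite_eq', mem_univ, if_true]

theorem card_mul_card_zeros_dualProd_prod [Fintype F] [DecidableEq F] [Fintype M]
    [Fintype (Module.Dual F M)] [Fintype W] {N : QuadraticForm F W} (hN : N.Anisotropic) :
    (Fintype.card F * #{p | (QuadraticForm.dualProd F M).prod N p = 0} : ℤ) =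
      Fintype.card (Module.Dual F M) *
        (Fintype.card M * Fintype.card W + Fintype.card F - Fintype.card W) := by
  classical
  have hψ := AddChar.FiniteField.primitiveChar_to_Complex_isPrimitive F
  set ψ := AddChar.FiniteField.primitiveChar_to_Complex F
  have hsum : ∀ t ∈ univ.erase (0 : F), ∑ p, ψ (t * (QuadraticForm.dualProd F M).prod N p) =
      Fintype.card (Module.Dual F M) * ∑ w, ψ (t * N w) := fun t ht => by
    simp only [Fintype.sum_prod_type (α₁ := Module.Dual F M × M), QuadraticMap.prod_apply, mul_add,
      AddChar.map_add_eq_mul]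
    rw [← sum_mul_sum, sum_addChar_mul_dualProd hψ (ne_of_mem_erase ht)]
  have hzeros : ({w | N w = 0} : Finset W) = {0} := by
    ext w
    simpa using ⟨hN w, fun hw => by rw [hw, QuadraticMap.map_zero]⟩
  have hcount := sum_erase_zero_sum_addChar_mul hψ ((QuadraticForm.dualProd F M).prod N)
  rw [sum_congr rfl hsum, ← mul_sum, sum_erase_zero_sum_addChar_mul hψ, hzeros, card_singleton,
    Fintype.card_prod, Fintype.card_prod] at hcount
  push_cast at hcount
  rify
  apply Complex.ofReal_injective
  push_cast
  linear_combination -hcount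

/-- `Q` is the orthogonal sum of a hyperbolic space and an anisotropic form of dimension `1 - ε`,
so that `ε = 1` and `ε = -1` are the hyperbolic and the elliptic type; this makes sense in every
characteristic. -/
def HasWittType (Q : QuadraticForm F V) (ε : ℤ) : Prop :=
  ∃ (n d : ℕ) (N : QuadraticForm F (Fin d → F)), N.Anisotropic ∧ (d : ℤ) = 1 - ε ∧
    Q.Equivalent ((QuadraticForm.dualProd F (Fin n → F)).prod N)

theorem card_zeros_of_hasWittType [Fintype F] [DecidableEq F] [Fintype V] {Q : QuadraticForm F V}
    {m : ℕ} (hV : Module.finrank F V = 2 * (m + 1)) {ε : ℤ} (hε : ε = 1 ∨ ε = -1)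
    (hQ : HasWittType Q ε) :
    (#{x | Q x = 0} : ℤ) = Fintype.card F * (ε * Fintype.card F ^ m) ^ 2 +
      (Fintype.card F - 1) * (ε * Fintype.card F ^ m) := by
  classical
  obtain ⟨n, d, N, hN, hd, ⟨e⟩⟩ := hQ
  have : Fintype (Module.Dual F (Fin n → F)) :=
    Fintype.ofEquiv _ (dotProductEquiv F (Fin n)).toEquiv
  have hdual : Fintype.card (Module.Dual F (Fin n → F)) = Fintype.card F ^ n := by
    rw [← Fintype.card_congr (dotProductEquiv F (Fin n)).toEquiv, Fintype.card_pi_const]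
  have hdim : 2 * (m + 1) = 2 * n + d := by
    rw [← hV, e.toLinearEquiv.finrank_eq]
    simp [two_mul]
  have hcard : #{x | Q x = 0} = #{p | (QuadraticForm.dualProd F (Fin n → F)).prod N p = 0} :=
    card_equiv e.toEquiv fun x => by rw [mem_filter_univ, mem_filter_univ, ← e.map_app x]; rfl
  have hcount := card_mul_card_zeros_dualProd_prod (M := Fin n → F) hN
  rw [← hcard, hdual, Fintype.card_pi_const, Fintype.card_pi_const] at hcount
  have hq : (Fintype.card F : ℤ) ≠ 0 := Nat.cast_ne_zero.2 Fintype.card_ne_zero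
  apply mul_left_cancel₀ hq
  rw [hcount]
  rcases hε with rfl | rfl
  · obtain rfl : d = 0 := by omega
    obtain rfl : n = m + 1 := by omega
    push_cast
    ring
  · obtain rfl : d = 2 := by omega
    obtain rfl : n = m := by omega
    push_cast
    ring

theorem equivalent_of_forall_map_eq [FiniteDimensional F V] [FiniteDimensional F W]
    {Q : QuadraticForm F V} {Q' : QuadraticForm F W} (hQ : Q.polarBilin.SeparatingLeft)
    (f : V →ₗ[F] W) (hf : ∀ x, Q' (f x) = Q x) (hdim : Module.finrank F V = Module.finrank F W) :
    Q.Equivalent Q' := by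
  have hinj : Function.Injective f := (injective_iff_map_eq_zero f).2 fun x hx => hQ x fun y => by
    simp [QuadraticMap.polar, ← hf, hx]
  exact ⟨{ f.linearEquivOfInjective hinj hdim with map_app' := hf }⟩

/-- The `k` coordinate pairs `(x 0, x 1), …, (x (2k - 2), x (2k - 1))` of `x`, with the
even-indexed entries viewed as a functional by means of the dot product. -/
def coordinatePairs {k n : ℕ} (hk : 2 * k ≤ n) :
    (Fin n → F) →ₗ[F] Module.Dual F (Fin k → F) × (Fin k → F) :=
  ((dotProductEquiv F (Fin k)).toLinearMap ∘ₗ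
      LinearMap.funLeft F F fun i : Fin k => ⟨2 * i.1, by omega⟩).prod
    (LinearMap.funLeft F F fun i : Fin k => ⟨2 * i.1 + 1, by omega⟩)

theorem dualProd_coordinatePairs {k n : ℕ} (hk : 2 * k ≤ n) (x : Fin n → F) :
    QuadraticForm.dualProd F (Fin k → F) (coordinatePairs hk x) =
      ∑ i : Fin k, x ⟨2 * i.1, by omega⟩ * x ⟨2 * i.1 + 1, by omega⟩ :=
  rfl

theorem hasWittType_of_hypForm {Q : QuadraticForm F V} (hQ : Q.polarBilin.SeparatingLeft) {m : ℕ}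
    (e : (Fin (2 * m) → F) ≃ₗ[F] V) (he : ∀ x, Q (e x) = hypForm F m x) : HasWittType Q 1 := by
  have := FiniteDimensional.of_surjective e.toLinearMap e.surjective
  refine ⟨m, 0, 0, fun x _ => Subsingleton.elim _ _, by simp, equivalent_of_forall_map_eq hQ
    ((coordinatePairs le_rfl).prod 0 ∘ₗ e.symm.toLinearMap) (fun x => ?_) ?_⟩
  · obtain ⟨x, rfl⟩ := e.surjective x
    simp [he, hypForm, dualProd_coordinatePairs, -QuadraticForm.dualProd_apply]
  · rw [← e.finrank_eq]
    simp [two_mul]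

theorem anisotropic_weightedSumSquares_one_cons {b : F} (hb : ¬∃ c, -b = c ^ 2) :
    (QuadraticMap.weightedSumSquares F ![1, b]).Anisotropic := by
  intro y hy
  have hy' : y 0 ^ 2 + b * y 1 ^ 2 = 0 := by
    simpa [QuadraticMap.weightedSumSquares_apply, sq] using hy
  have hy1 : y 1 = 0 := by
    by_contra h
    refine hb ⟨y 0 / y 1, ?_⟩
    field_simp
    linear_combination -hy'
  have hy0 : y 0 = 0 := by simpa [hy1] using hy'
  ext i
  fin_cases i
  exacts [hy0, hy1]

theorem hasWittType_of_ellForm {Q : QuadraticForm F V} (hQ : Q.polarBilin.SeparatingLeft) {m : ℕ}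
    (hm : 1 ≤ m) {b : F} (hb : ¬∃ c, -b = c ^ 2) (e : (Fin (2 * m) → F) ≃ₗ[F] V)
    (he : ∀ x, Q (e x) = ellForm F m b x) : HasWittType Q (-1) := by
  have := FiniteDimensional.of_surjective e.toLinearMap e.surjective
  let lastTwo : Fin 2 → Fin (2 * m) := ![⟨2 * m - 2, by omega⟩, ⟨2 * m - 1, by omega⟩]
  refine ⟨m - 1, 2, _, anisotropic_weightedSumSquares_one_cons hb, by norm_num,
    equivalent_of_forall_map_eq hQ ((coordinatePairs (by omega)).prod
      (LinearMap.funLeft F F lastTwo) ∘ₗ e.symm.toLinearMap) (fun x => ?_) ?_⟩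
  · obtain ⟨x, rfl⟩ := e.surjective x
    simp [he, ellForm, hm, lastTwo, LinearMap.funLeft_apply, dualProd_coordinatePairs, add_assoc,
      sq, -QuadraticForm.dualProd_apply]
  · simp only [← e.finrank_eq, Module.finrank_prod, Subspace.dual_finrank_eq,
      Module.finrank_fin_fun]
    omega

end WittType

theorem stmt6_general {F V : Type*} [Field F] [Fintype F] [DecidableEq F] [AddCommGroup V]
    [Module F V] [Fintype V] [DecidableEq V] {q m : ℕ} (hq : Fintype.card F = q) (hm : 2 ≤ m)
    (hV : Module.finrank F V = 2 * m) {ε : ℤ} (hε : ε = 1 ∨ ε = -1) {Q : QuadraticForm F V}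
    (hnd : Q.polarBilin.SeparatingLeft) (htype : HasWittType Q ε) :
    IsRegularAddPDS (singularVectors Q) ((q : ℤ) ^ (2 * m))
      (((q : ℤ) ^ m - ε) * ((q : ℤ) ^ (m - 1) + ε))
      ((q : ℤ) * ((q : ℤ) ^ (m - 1) - ε) * ((q : ℤ) ^ (m - 2) + ε) + (q : ℤ) - 2)
      ((q : ℤ) ^ (m - 1) * ((q : ℤ) ^ (m - 1) + ε)) := by
  subst hq
  obtain ⟨n, rfl⟩ := Nat.exists_eq_add_of_le' hm
  have hεε : ε ^ 2 = 1 := by rcases hε with rfl | rfl <;> norm_num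
  have hcard : (Fintype.card V : ℤ) = (Fintype.card F * (ε * Fintype.card F ^ (n + 1))) ^ 2 := by
    rw [Module.card_eq_pow_finrank (K := F), hV]
    push_cast
    linear_combination -(Fintype.card F : ℤ) ^ (2 * (n + 2)) * hεε
  rw [show n + 2 - 1 = n + 1 from rfl, Nat.add_sub_cancel]
  convert isRegularAddPDS_singularVectors hnd hcard (card_zeros_of_hasWittType hV hε htype) using 1
  · linear_combination -(Fintype.card F : ℤ) ^ (2 * (n + 2)) * hεε
  · linear_combination -((Fintype.card F : ℤ) ^ (2 * n + 3) + 1) * hεε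
  · linear_combination -((Fintype.card F : ℤ) ^ (2 * n + 2) + Fintype.card F) * hεε
  · linear_combination -(Fintype.card F : ℤ) ^ (2 * n + 2) * hεε

/-- the nonzero singular vectors of a nondegenerate quadratic form of type
`ε = ±1` on `F_q^{2m}` form a regular PDS with the parameters of `VO^ε(2m,q)`. -/
theorem stmt6 {F : Type*} [Field F] [Fintype F] [DecidableEq F] (q m : ℕ)
    (hq : Fintype.card F = q) (hodd : Odd q) (hm : 2 ≤ m) (ε : ℤ) (hε : ε = 1 ∨ ε = -1)
    (Q : (Fin (2 * m) → F) → F)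
    (hQhom : ∀ (a : F) (x : Fin (2 * m) → F), Q (a • x) = a ^ 2 * Q x)
    (hadd : ∀ x x' y : Fin (2 * m) → F, polarQ Q (x + x') y = polarQ Q x y + polarQ Q x' y)
    (hsmul : ∀ (a : F) (x y : Fin (2 * m) → F), polarQ Q (a • x) y = a * polarQ Q x y)
    (hnd : ∀ x : Fin (2 * m) → F, (∀ y, polarQ Q x y = 0) → x = 0)
    (htype :
      (ε = 1 ∧ ∃ e : (Fin (2 * m) → F) ≃ₗ[F] (Fin (2 * m) → F),
          ∀ x, Q (e x) = hypForm F m x) ∨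
      (ε = -1 ∧ ∃ b : F, (¬ ∃ c : F, -b = c ^ 2) ∧
          ∃ e : (Fin (2 * m) → F) ≃ₗ[F] (Fin (2 * m) → F), ∀ x, Q (e x) = ellForm F m b x)) :
    IsRegularAddPDS (Finset.univ.filter (fun x : Fin (2 * m) → F => x ≠ 0 ∧ Q x = 0))
      ((q : ℤ) ^ (2 * m))
      (((q : ℤ) ^ m - ε) * ((q : ℤ) ^ (m - 1) + ε))
      ((q : ℤ) * ((q : ℤ) ^ (m - 1) - ε) * ((q : ℤ) ^ (m - 2) + ε) + (q : ℤ) - 2)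
      ((q : ℤ) ^ (m - 1) * ((q : ℤ) ^ (m - 1) + ε)) := by
  subst hq
  refine stmt6_general (Q := .ofPolar Q (by simpa only [sq, smul_eq_mul] using hQhom) hadd hsmul)
    rfl hm (Module.finrank_fin_fun F) hε hnd ?_
  obtain ⟨rfl, e, he⟩ | ⟨rfl, b, hb, e, he⟩ := htype
  · exact hasWittType_of_hypForm hnd e he
  · exact hasWittType_of_ellForm hnd (by omega) hb e he
end

section
/- Let q be an odd prime power, m ≥ 2, and Q a nondegenerate quadratic form of type ε = ±1 on V = F_q^{2m}. Let D₁ = {x ∈ V : Q(x) is a nonzero square in F_q}. Then D₁ is a regular partial difference set in the additive group of V with parameters v = q^{2m}, k = (1/2)(q−1)(q^m − ε)q^{m−1}, λ = (1/4)q^{m−1}(q−1)(q^m − q^{m−1} − 2ε) + ε q^{m−1}, μ = (1/4)q^{m−1}(q−1)(q^m − q^{m−1} − 2ε). -/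
open Finset

/-!
For a fixed `x ≠ 0`, the restriction of `Q` to the line `y + F x` is
`Q (y + r x) = (1 - r) Q y + r Q (x + y) - r (1 - r) Q x`, so for given `a, b` the value at `r`
agrees with `(1 - r) a + r b - r (1 - r) Q x` for all `r` if `(Q y, Q (x + y)) = (a, b)`, and
otherwise for at most one `r`. Counting such pairs `(y, r)` in two ways expresses the number `N` of
`y` with `(Q y, Q (x + y)) = (a, b)` through the value distribution of `Q` alone, which is governed
by its Gauss sum `S = ε q ^ m`: with `R = #{r | (1 - r) a + r b = r (1 - r) Q x}`,
`q ^ 2 N = q ^ (2m) + S q (R - 1)`.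
If `χ` is the quadratic character then `1 + χ` (vanishing at `0`) is twice the indicator function of
the nonzero squares. Summing against `φ a * φ' b` for `φ, φ' ∈ {1, χ}` turns `R` into the Jacobi sum
`J(φ, φ')` times `∑ a, φ a * φ' (Q x - a)`, a rescaled Jacobi sum when
`Q x ≠ 0`; the four Jacobi sums are known.
-/

section CharacterSums

variable {F R : Type*} [Field F] [Fintype F] [CommRing R]

lemma sum_mulChar_mul_sub (χ φ : MulChar F R) {c : F} (hc : c ≠ 0) :
    ∑ a, χ a * φ (c - a) = χ c * φ c * jacobiSum χ φ := by
  rw [jacobiSum, mul_sum, ← Equiv.sum_comp (Equiv.mulLeft₀ c hc)]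
  refine sum_congr rfl fun a _ => ?_
  rw [Equiv.mulLeft₀_apply, map_mul, show c - c * a = c * (1 - a) by ring, map_mul]
  ring

lemma sum_mulChar_mul_neg (χ φ : MulChar F R) :
    ∑ a, χ a * φ (-a) = φ (-1) * ∑ a, (χ * φ) a := by
  rw [mul_sum]
  refine sum_congr rfl fun a _ => ?_
  rw [MulChar.mul_apply, ← neg_one_mul a, map_mul]
  ring

lemma sum_one_mulChar_apply : ∑ a, (1 : MulChar F R) a = (Fintype.card F : R) - 1 := by
  classical
  rw [MulChar.sum_one_eq_card_units, Fintype.card_units, Nat.cast_sub Fintype.card_pos,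
    Nat.cast_one]

lemma sum_ite_mulChar_mul [DecidableEq F] (χ φ : MulChar F R) (c r : F) :
    ∑ a, ∑ b, (if (1 - r) * a + r * b = r * (1 - r) * c then χ a * φ b else 0)
      = χ r * φ (1 - r) * ∑ a, χ a * φ (c - a) := by
  rcases eq_or_ne r 0 with rfl | hr
  · simp +contextual [MulChar.map_zero]
  rcases eq_or_ne (1 - r) 0 with hr' | hr'
  · simp [hr', hr, MulChar.map_zero]
  have line_iff (a b : F) :
      (1 - r) * (r * a) + r * ((1 - r) * b) = r * (1 - r) * c ↔ b = c - a := by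
    rw [eq_sub_iff_add_eq', ← mul_right_inj' (mul_ne_zero hr hr') (b := a + b)]
    exact Eq.congr (by ring) rfl
  rw [← Equiv.sum_comp (Equiv.mulLeft₀ r hr), mul_sum]
  refine sum_congr rfl fun a _ => ?_
  rw [← Equiv.sum_comp (Equiv.mulLeft₀ (1 - r) hr')]
  simp only [Equiv.mulLeft₀_apply, line_iff, sum_ite_eq', mem_univ, if_true, map_mul]
  ring

end CharacterSums

section QuadraticCharacter

variable {F : Type*} [Field F] [Fintype F] [DecidableEq F]

lemma quadraticChar_inv : (quadraticChar F)⁻¹ = quadraticChar F :=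
  (quadraticChar_isQuadratic F).inv

lemma quadraticChar_mul_self : quadraticChar F * quadraticChar F = 1 := by
  rw [← sq, (quadraticChar_isQuadratic F).sq_eq_one]

lemma jacobiSum_quadraticChar (hF : ringChar F ≠ 2) :
    jacobiSum (quadraticChar F) (quadraticChar F) = -quadraticChar F (-1) := by
  simpa only [quadraticChar_inv] using jacobiSum_nontrivial_inv (quadraticChar_ne_one hF)

lemma quadraticChar_neg_one_mul_self : quadraticChar F (-1) * quadraticChar F (-1) = 1 := by
  rw [← map_mul, neg_one_mul, neg_neg, map_one]

lemma sum_quadraticChar_mul_sub (hF : ringChar F ≠ 2) (c : F) :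
    ∑ a, quadraticChar F a * quadraticChar F (c - a)
      = quadraticChar F (-1) * ((if c = 0 then (Fintype.card F : ℤ) else 0) - 1) := by
  split_ifs with hc
  · simp_rw [hc, zero_sub]
    rw [sum_mulChar_mul_neg, quadraticChar_mul_self, sum_one_mulChar_apply]
  · rw [sum_mulChar_mul_sub _ _ hc, jacobiSum_quadraticChar hF, ← sq, quadraticChar_sq_one hc]
    ring

lemma sum_comp_sq (hF : ringChar F ≠ 2) (g : F → ℤ) :
    ∑ u, g (u ^ 2) = ∑ a, (1 + quadraticChar F a) * g a := by
  rw [← sum_fiberwise univ (fun u : F => u ^ 2)]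
  refine sum_congr rfl fun a _ => ?_
  have card_sqrts : (#{u : F | u ^ 2 = a} : ℤ) = 1 + quadraticChar F a := by
    rw [add_comm, ← quadraticChar_card_sqrts hF a, Set.toFinset_ofPred]
  rw [sum_congr rfl fun u hu => congrArg g (mem_filter.mp hu).2, sum_const, nsmul_eq_mul,
    card_sqrts]

lemma one_add_quadraticChar_eq_ite (a : F) :
    (1 : MulChar F ℤ) a + quadraticChar F a = if ∃ u, u ≠ 0 ∧ a = u ^ 2 then 2 else 0 := by
  rcases eq_or_ne a 0 with rfl | ha
  · have not_sq : ¬ ∃ u : F, u ≠ 0 ∧ 0 = u ^ 2 := fun ⟨_, hu, h⟩ => pow_ne_zero 2 hu h.symm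
    simp [not_sq, MulChar.map_zero]
  have isSquare_iff : IsSquare a ↔ ∃ u, u ≠ 0 ∧ a = u ^ 2 := by
    refine (isSquare_iff_exists_sq a).trans (exists_congr fun u => ?_)
    exact ⟨fun h => ⟨by rintro rfl; simp [h] at ha, h⟩, And.right⟩
  simp only [MulChar.one_apply (isUnit_iff_ne_zero.mpr ha), ← isSquare_iff,
    ← quadraticChar_one_iff_isSquare ha]
  rcases quadraticChar_dichotomy ha with h | h <;> simp [h]

lemma sum_jacobiSum_mul_sum_mulChar (hF : ringChar F ≠ 2) (c : F) :
    ∑ χ ∈ {1, quadraticChar F}, ∑ φ ∈ {1, quadraticChar F},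
        jacobiSum χ φ * ∑ a, χ a * φ (c - a)
      = ((Fintype.card F : ℤ) - 1) * (Fintype.card F - 3)
        + 2 * ((1 : MulChar F ℤ) c + quadraticChar F c) := by
  have hχ := quadraticChar_ne_one hF
  have h1χ : jacobiSum 1 (quadraticChar F) = -1 := jacobiSum_one_nontrivial hχ
  have hχ1 : jacobiSum (quadraticChar F) 1 = -1 := by rw [jacobiSum_comm, h1χ]
  simp only [sum_pair hχ.symm, jacobiSum_one_one, h1χ, hχ1, jacobiSum_quadraticChar hF,
    sum_quadraticChar_mul_sub hF]
  rcases eq_or_ne c 0 with rfl | hc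
  · simp only [zero_sub, sum_mulChar_mul_neg, one_mul, mul_one, sum_one_mulChar_apply,
      MulChar.sum_eq_zero_of_ne_one hχ, MulChar.map_zero, if_true,
      MulChar.one_apply isUnit_one.neg]
    linear_combination (1 - (Fintype.card F : ℤ)) * quadraticChar_neg_one_mul_self (F := F)
  · simp only [sum_mulChar_mul_sub _ _ hc, h1χ, hχ1, jacobiSum_one_one, hc, if_false,
      MulChar.one_apply (isUnit_iff_ne_zero.mpr hc)]
    linear_combination quadraticChar_neg_one_mul_self (F := F)

lemma sum_one_add_quadraticChar_mul (hF : ringChar F ≠ 2) {b : F} (hb : b ≠ 0) (e : F) :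
    ∑ v, (1 + quadraticChar F (e - b * v)) * (1 + quadraticChar F v)
      = Fintype.card F
        + quadraticChar F (-b) * ((if e = 0 then (Fintype.card F : ℤ) else 0) - 1) := by
  set η := quadraticChar F
  have twist (v : F) : η v = η b * η (b * v) := by
    rw [map_mul, ← mul_assoc, ← sq, quadraticChar_sq_one hb, one_mul]
  have sum_sub : ∑ a, η (e - a) = 0 :=
    (Equiv.sum_comp (Equiv.subLeft e) η).trans (quadraticChar_sum_zero hF)
  calc ∑ v, (1 + η (e - b * v)) * (1 + η v)
      = ∑ v, (1 + η (e - b * v)) * (1 + η b * η (b * v)) := by simp only [← twist]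
    _ = ∑ a, (1 + η (e - a)) * (1 + η b * η a) :=
        Equiv.sum_comp (Equiv.mulLeft₀ b hb) fun a => (1 + η (e - a)) * (1 + η b * η a)
    _ = ∑ a, (1 + η (e - a) + η b * η a + η b * (η a * η (e - a))) :=
        sum_congr rfl fun a _ => by ring
    _ = Fintype.card F + η b * ∑ a, η a * η (e - a) := by
        simp only [sum_add_distrib, ← mul_sum, sum_sub, quadraticChar_sum_zero hF, sum_const,
          card_univ, nsmul_one, mul_zero, add_zero, η]
    _ = _ := by
        rw [sum_quadraticChar_mul_sub hF, ← neg_one_mul b, map_mul]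
        ring

end QuadraticCharacter

/-- `HasGaussSum f S` says that the values of `f : X → A` are distributed in the finite abelian
group `A` as if all the Gauss sums `∑ x, ψ (f x)`, for nontrivial characters `ψ` of `A`, were equal
to the integer `S`. It is phrased by summing an arbitrary integer-valued `g` over the values of `f`,
so that no complex characters are needed. A nondegenerate quadratic form of type `ε` on `F_q^{2m}`
has Gauss sum `ε * q ^ m`. -/
def HasGaussSum {X A : Type*} [Fintype X] [AddCommGroup A] [Fintype A] (f : X → A) (S : ℤ) :
    Prop :=
  ∀ g : A → ℤ, (Fintype.card A : ℤ) * ∑ x, g (f x)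
    = (Fintype.card X - S) * ∑ a, g a + S * Fintype.card A * g 0

namespace HasGaussSum

variable {X Y A : Type*} [Fintype X] [Fintype Y] [AddCommGroup A] [Fintype A]

lemma card_fiber [DecidableEq A] {f : X → A} {S : ℤ} (hf : HasGaussSum f S) (a : A) :
    (Fintype.card A : ℤ) * #{x | f x = a}
      = Fintype.card X + S * ((if a = 0 then (Fintype.card A : ℤ) else 0) - 1) := by
  have h := hf fun b => if b = a then 1 else 0
  simp only [sum_boole, filter_eq', mem_univ, if_true, card_singleton, eq_comm (a := (0 : A))] at h
  rw [h]
  split_ifs <;> push_cast <;> ring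

lemma comp_equiv {f : X → A} {S : ℤ} (hf : HasGaussSum f S) (e : Y ≃ X) :
    HasGaussSum (f ∘ e) S := fun g => by
  simpa only [Function.comp_apply, e.sum_comp fun x => g (f x), Fintype.card_congr e] using hf g

lemma zero : HasGaussSum (fun _ : Unit => (0 : A)) 1 := fun g => by simp

lemma prod_add {f : X → A} {f' : Y → A} {S S' : ℤ} (hf : HasGaussSum f S)
    (hf' : HasGaussSum f' S') :
    HasGaussSum (fun p : X × Y => f p.1 + f' p.2) (S * S') := fun g => by
  have sum_left (y : Y) : (Fintype.card A : ℤ) * ∑ x, g (f x + f' y)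
      = (Fintype.card X - S) * ∑ a, g a + S * Fintype.card A * g (f' y) := by
    simpa [← Equiv.sum_comp (Equiv.addRight (f' y)) g] using hf fun a => g (a + f' y)
  have sum_right := hf' g
  rw [Fintype.sum_prod_type_right]
  apply mul_left_cancel₀ (Nat.cast_ne_zero.mpr Fintype.card_ne_zero : (Fintype.card A : ℤ) ≠ 0)
  rw [mul_sum univ _ (Fintype.card A : ℤ), sum_congr rfl fun y _ => sum_left y]
  simp only [sum_add_distrib, sum_const, card_univ, nsmul_eq_mul, ← mul_sum, Fintype.card_prod]
  push_cast
  linear_combination (Fintype.card A * S : ℤ) * sum_right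

lemma fin_sum {n : ℕ} {f : Fin n → X → A} {S : Fin n → ℤ} (hf : ∀ i, HasGaussSum (f i) (S i)) :
    HasGaussSum (fun x : Fin n → X => ∑ i, f i (x i)) (∏ i, S i) := by
  induction n with
  | zero => simpa [Function.comp_def] using zero.comp_equiv (Equiv.ofUnique (Fin 0 → X) Unit)
  | succ n ih =>
    rw [Fin.prod_univ_succ]
    have h := ((hf 0).prod_add (ih fun i => hf i.succ)).comp_equiv (Fin.consEquiv fun _ => X).symm
    simpa [Function.comp_def, Fin.sum_univ_succ, Fin.tail] using h

end HasGaussSum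

/-- The coordinates of `F^{2m}` grouped into the `m` planes of consecutive coordinates that occur
in `hypForm` and `ellForm`. -/
def finTwoMulArrowEquiv (F : Type*) (m : ℕ) : (Fin (2 * m) → F) ≃ (Fin m → F × F) :=
  (Equiv.arrowCongr ((finCongr (mul_comm 2 m)).trans finProdFinEquiv.symm) (Equiv.refl F)).trans <|
    (Equiv.curry (Fin m) (Fin 2) F).trans <| Equiv.piCongrRight fun _ => finTwoArrowEquiv F

lemma finTwoMulArrowEquiv_apply {F : Type*} (m : ℕ) (x : Fin (2 * m) → F) (i : Fin m) :
    finTwoMulArrowEquiv F m x i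
      = (x ⟨2 * i, by have := i.2; omega⟩, x ⟨2 * i + 1, by have := i.2; omega⟩) := by
  simp only [finTwoMulArrowEquiv]
  refine Prod.ext (congrArg x (Fin.ext ?_)) (congrArg x (Fin.ext ?_))
  · simp [finProdFinEquiv]
  · simp [finProdFinEquiv, add_comm]

section StandardForms

variable {F : Type*} [Field F] [Fintype F]

lemma hasGaussSum_mul : HasGaussSum (fun p : F × F => p.1 * p.2) (Fintype.card F) := fun g => by
  classical
  have sum_line (u : F) : ∑ v, g (u * v) = ∑ a, g a + if u = 0 then
      Fintype.card F * g 0 - ∑ a, g a else 0 := by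
    split_ifs with hu
    · simp [hu]
    · simpa using Equiv.sum_comp (Equiv.mulLeft₀ u hu) g
  rw [Fintype.sum_prod_type]
  simp only [sum_line, sum_add_distrib, sum_const, card_univ, nsmul_eq_mul, sum_ite_eq', mem_univ,
    if_true, Fintype.card_prod]
  push_cast
  ring

lemma hasGaussSum_sq_add_mul_sq [DecidableEq F] (hF : ringChar F ≠ 2) {b : F} (hb : b ≠ 0) :
    HasGaussSum (fun p : F × F => p.1 ^ 2 + b * p.2 ^ 2)
      (quadraticChar F (-b) * Fintype.card F) := fun g => by
  have sum_fst (v : F) : ∑ u, g (u ^ 2 + b * v)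
      = ∑ e, (1 + quadraticChar F (e - b * v)) * g e := by
    rw [sum_comp_sq hF fun a => g (a + b * v), ← Equiv.sum_comp (Equiv.subRight (b * v))]
    simp only [Equiv.subRight_apply, sub_add_cancel]
  have sum_eq : ∑ p : F × F, g (p.1 ^ 2 + b * p.2 ^ 2)
      = ∑ e, (∑ v, (1 + quadraticChar F (e - b * v)) * (1 + quadraticChar F v)) * g e := by
    rw [Fintype.sum_prod_type_right, sum_comp_sq hF fun a => ∑ u, g (u ^ 2 + b * a)]
    simp_rw [sum_fst, mul_sum, sum_mul]
    rw [sum_comm]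
    exact sum_congr rfl fun e _ => sum_congr rfl fun v _ => by ring
  rw [sum_eq, sum_congr rfl fun e _ => by rw [sum_one_add_quadraticChar_mul hF hb e]]
  simp only [add_mul, mul_sub, sub_mul, sum_add_distrib, sum_sub_distrib, mul_assoc,
    ← mul_sum, ite_mul, mul_ite, sum_ite_eq', mem_univ, if_true, Fintype.card_prod, zero_mul,
    mul_zero, one_mul]
  push_cast
  ring

lemma hasGaussSum_hypForm (m : ℕ) : HasGaussSum (hypForm F m) (Fintype.card F ^ m) := by
  have h := (HasGaussSum.fin_sum fun _ : Fin m => hasGaussSum_mul (F := F)).comp_equiv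
    (finTwoMulArrowEquiv F m)
  simpa [Function.comp_def, finTwoMulArrowEquiv_apply, ← hypForm.eq_def] using h

lemma hasGaussSum_ellForm (hF : ringChar F ≠ 2) {m : ℕ} (hm : m ≠ 0) {b : F}
    (hb : ¬ ∃ c, -b = c ^ 2) : HasGaussSum (ellForm F m b) (-Fintype.card F ^ m) := by
  classical
  obtain ⟨k, rfl⟩ := Nat.exists_eq_succ_of_ne_zero hm
  have hb0 : b ≠ 0 := by
    rintro rfl
    exact hb ⟨0, by simp⟩
  have char_neg_b : quadraticChar F (-b) = -1 := by
    rwa [quadraticChar_neg_one_iff_not_isSquare, isSquare_iff_exists_sq]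
  have anisotropic_plane := hasGaussSum_sq_add_mul_sq hF hb0
  rw [char_neg_b, neg_one_mul] at anisotropic_plane
  have planes : ∀ i : Fin (k + 1), HasGaussSum
      (Fin.snoc (α := fun _ => F × F → F) (fun _ p => p.1 * p.2)
        (fun p => p.1 ^ 2 + b * p.2 ^ 2) i)
      (Fin.snoc (α := fun _ => ℤ) (fun _ => (Fintype.card F : ℤ)) (-Fintype.card F) i) :=
    Fin.lastCases (by simpa using anisotropic_plane) fun i => by simpa using hasGaussSum_mul
  have h := (HasGaussSum.fin_sum planes).comp_equiv (finTwoMulArrowEquiv F (k + 1))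
  rw [Fin.prod_univ_castSucc] at h
  simp only [Function.comp_def, finTwoMulArrowEquiv_apply, Fin.sum_univ_castSucc,
    Fin.snoc_castSucc, Fin.snoc_last, Fin.val_castSucc, Fin.val_last, prod_const, card_univ,
    Fintype.card_fin, mul_neg, ← pow_succ] at h
  convert h using 2 with x
  rw [ellForm, dif_pos (Nat.le_add_left 1 k), add_assoc]
  rfl

end StandardForms

section Lines

variable {F V : Type*} [Field F] [AddCommGroup V] [Module F V]

lemma quadraticForm_apply_add_smul (Q : QuadraticForm F V) (x y : V) (r : F) :
    Q (y + r • x) = (1 - r) * Q y + r * Q (x + y) - r * (1 - r) * Q x := by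
  rw [add_comm x y, QuadraticMap.map_add Q y x, QuadraticMap.map_add Q y, QuadraticMap.map_smul,
    QuadraticMap.polar_smul_right]
  simp only [smul_eq_mul]
  ring

variable [Fintype F] [DecidableEq F]

lemma card_filter_line_eq_zero (A B : F) :
    #{r : F | (1 - r) * A + r * B = 0}
      = if A = B then if A = 0 then Fintype.card F else 0 else 1 := by
  split_ifs with hAB hA
  · simp [← hAB, hA]
  · simp [← hAB, ← add_mul, hA]
  · have root_iff (r : F) : (1 - r) * A + r * B = 0 ↔ r = A / (A - B) := by
      rw [eq_div_iff (sub_ne_zero.mpr hAB)]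
      exact ⟨fun h => by linear_combination -h, fun h => by linear_combination -h⟩
    simp only [root_iff, filter_eq', mem_univ, if_true, card_singleton]

lemma card_filter_apply_add_smul_eq (Q : QuadraticForm F V) (x y : V) (a b : F) :
    (#{r : F | Q (y + r • x) = (1 - r) * a + r * b - r * (1 - r) * Q x} : ℤ)
      = Fintype.card F * (if Q y = a ∧ Q (x + y) = b then 1 else 0) + 1
        - if Q.polarBilin x y = b - a - Q x then 1 else 0 := by
  have zero_iff (r : F) : Q (y + r • x) = (1 - r) * a + r * b - r * (1 - r) * Q x ↔
      (1 - r) * (Q y - a) + r * (Q (x + y) - b) = 0 := by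
    rw [quadraticForm_apply_add_smul, ← sub_eq_zero]
    exact Eq.congr (by ring) rfl
  have polar_iff : Q.polarBilin x y = b - a - Q x ↔ Q y - a = Q (x + y) - b := by
    rw [QuadraticMap.polarBilin_apply_apply, QuadraticMap.polar]
    exact ⟨fun h => by linear_combination -h, fun h => by linear_combination -h⟩
  have both_iff : Q y = a ∧ Q (x + y) = b ↔ Q y - a = Q (x + y) - b ∧ Q y - a = 0 := by
    constructor
    · rintro ⟨rfl, rfl⟩
      simp
    · rintro ⟨h, h'⟩
      exact ⟨sub_eq_zero.mp h', sub_eq_zero.mp (h ▸ h')⟩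
  simp only [zero_iff, card_filter_line_eq_zero, polar_iff, both_iff, ite_and]
  split_ifs <;> simp

variable [Fintype V]

lemma sum_card_filter_apply_add_smul_eq (Q : QuadraticForm F V) (x : V) (a b : F) :
    ∑ r : F, (#{y | Q (y + r • x) = (1 - r) * a + r * b - r * (1 - r) * Q x} : ℤ)
      = Fintype.card F * #{y | Q y = a ∧ Q (x + y) = b} + Fintype.card V
        - #{y | Q.polarBilin x y = b - a - Q x} := by
  have double_count := sum_card_bipartiteAbove_eq_sum_card_bipartiteBelow (s := (univ : Finset F))
    (t := (univ : Finset V))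
    fun r y => Q (y + r • x) = (1 - r) * a + r * b - r * (1 - r) * Q x
  simp only [bipartiteAbove, bipartiteBelow] at double_count
  rw [← Nat.cast_sum, double_count, Nat.cast_sum]
  simp only [card_filter_apply_add_smul_eq, sum_sub_distrib, sum_add_distrib, ← mul_sum, sum_boole,
    sum_const, card_univ, nsmul_one]

lemma card_mul_card_fiber_of_ne_zero {l : V →ₗ[F] F} (hl : l ≠ 0) (d : F) :
    Fintype.card F * #{y | l y = d} = Fintype.card V := by
  have hsurj := LinearMap.surjective hl
  have fibers_eq (e : F) : #{y | l y = e} = #{y | l y = d} :=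
    AddMonoidHom.card_fiber_eq_of_mem_range l (hsurj e) (hsurj d)
  have h := card_eq_sum_card_fiberwise (s := (univ : Finset V)) (t := univ) (f := l) (by simp)
  simp only [fibers_eq, sum_const, card_univ, smul_eq_mul] at h
  exact h.symm

end Lines

section Pairs

variable {F V : Type*} [Field F] [Fintype F] [AddCommGroup V] [Module F V]
  [Fintype V] {Q : QuadraticForm F V} {S : ℤ} {x : V}

lemma HasGaussSum.card_filter_pair [DecidableEq F] (hQ : HasGaussSum Q S)
    (hx : Q.polarBilin x ≠ 0) (a b : F) :
    (Fintype.card F : ℤ) ^ 2 * #{y | Q y = a ∧ Q (x + y) = b}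
      = Fintype.card V + S * Fintype.card F
        * (#{r : F | (1 - r) * a + r * b = r * (1 - r) * Q x} - 1) := by
  have card_translate (r e : F) : (Fintype.card F : ℤ) * #{y | Q (y + r • x) = e}
      = Fintype.card V + S * ((if e = 0 then (Fintype.card F : ℤ) else 0) - 1) :=
    (hQ.comp_equiv (Equiv.addRight (r • x))).card_fiber e
  have card_total : (Fintype.card F : ℤ) * ∑ r : F,
      (#{y | Q (y + r • x) = (1 - r) * a + r * b - r * (1 - r) * Q x} : ℤ)
      = Fintype.card F * Fintype.card V + S * (Fintype.card F
        * #{r : F | (1 - r) * a + r * b = r * (1 - r) * Q x} - Fintype.card F) := by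
    rw [mul_sum, sum_congr rfl fun r _ => card_translate r _]
    simp only [sub_eq_zero, sum_add_distrib, sum_sub_distrib, ← mul_sum, sum_const, card_univ,
      nsmul_eq_mul, ← sum_filter, mul_one]
    ring
  rw [sum_card_filter_apply_add_smul_eq] at card_total
  have card_hyperplane : (Fintype.card F : ℤ) * #{y | Q.polarBilin x y = b - a - Q x}
      = Fintype.card V := mod_cast card_mul_card_fiber_of_ne_zero hx (b - a - Q x)
  linear_combination card_hyperplane + card_total

lemma HasGaussSum.sum_mul_comp_add [DecidableEq F] (hQ : HasGaussSum Q S)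
    (hx : Q.polarBilin x ≠ 0) (g h : F → ℤ) :
    (Fintype.card F : ℤ) ^ 2 * ∑ y, g (Q y) * h (Q (x + y))
      = (Fintype.card V - S * Fintype.card F) * ((∑ a, g a) * ∑ b, h b)
        + S * Fintype.card F * ∑ r, ∑ a, ∑ b,
          if (1 - r) * a + r * b = r * (1 - r) * Q x then g a * h b else 0 := by
  have sum_fibers : ∑ y, g (Q y) * h (Q (x + y))
      = ∑ a, ∑ b, (#{y | Q y = a ∧ Q (x + y) = b} : ℤ) * (g a * h b) := by
    simp only [← sum_boole, sum_mul, ite_mul, one_mul, zero_mul]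
    rw [sum_congr rfl fun a _ => sum_comm, sum_comm]
    simp [ite_and]
  have sum_lines : ∑ r, ∑ a, ∑ b,
      (if (1 - r) * a + r * b = r * (1 - r) * Q x then g a * h b else 0)
      = ∑ a, ∑ b, (#{r : F | (1 - r) * a + r * b = r * (1 - r) * Q x} : ℤ) * (g a * h b) := by
    rw [sum_comm, sum_congr rfl fun a _ => sum_comm]
    simp only [← sum_boole, sum_mul, ite_mul, one_mul, zero_mul]
  rw [sum_fibers, sum_lines, sum_mul_sum]
  simp only [mul_sum, ← sum_add_distrib]
  refine sum_congr rfl fun a _ => sum_congr rfl fun b _ => ?_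
  linear_combination (g a * h b) * hQ.card_filter_pair hx a b

lemma HasGaussSum.sum_mulChar_mul_mulChar (hQ : HasGaussSum Q S) (hx : Q.polarBilin x ≠ 0)
    (χ φ : MulChar F ℤ) :
    (Fintype.card F : ℤ) ^ 2 * ∑ y, χ (Q y) * φ (Q (x + y))
      = (Fintype.card V - S * Fintype.card F) * ((∑ a, χ a) * ∑ b, φ b)
        + S * Fintype.card F * (jacobiSum χ φ * ∑ a, χ a * φ (Q x - a)) := by
  classical
  rw [hQ.sum_mul_comp_add hx, jacobiSum, sum_mul univ _ (∑ a, χ a * φ (Q x - a))]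
  simp only [sum_ite_mulChar_mul]

end Pairs

section PartialDifferenceSet

lemma pdsCountAdd_eq_card_filter {V : Type*} [AddGroup V] [Fintype V] [DecidableEq V]
    (D : Finset V) (x : V) : pdsCountAdd D x = #{y | y ∈ D ∧ x + y ∈ D} := by
  refine card_nbij' Prod.snd (fun y => (x + y, y)) ?_ ?_ ?_ ?_
  · rintro ⟨a, b⟩ h
    obtain ⟨⟨ha, hb⟩, rfl⟩ : (a ∈ D ∧ b ∈ D) ∧ a - b = x := by simpa using h
    simp [ha, hb]
  · intro y hy
    simpa [and_comm] using hy
  · rintro ⟨a, b⟩ h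
    obtain ⟨-, rfl⟩ : (a ∈ D ∧ b ∈ D) ∧ a - b = x := by simpa using h
    simp
  · exact fun y _ => rfl

variable {F V : Type*} [Field F] [Fintype F] [DecidableEq F] [Fintype V]

/-- The vectors on which `Q` takes a nonzero square value, i.e. the set `D₁`. -/
def nonzeroSquareLocus (Q : V → F) : Finset V :=
  {x | ∃ a, a ≠ 0 ∧ Q x = a ^ 2}

lemma one_add_quadraticChar_comp_eq_ite [DecidableEq V] (Q : V → F) (x : V) :
    (1 : MulChar F ℤ) (Q x) + quadraticChar F (Q x)
      = 2 * if x ∈ nonzeroSquareLocus Q then 1 else 0 := by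
  rw [one_add_quadraticChar_eq_ite]
  simp only [nonzeroSquareLocus, mem_filter, mem_univ, true_and, mul_ite, mul_one, mul_zero]

lemma HasGaussSum.card_nonzeroSquareLocus (hF : ringChar F ≠ 2) {Q : V → F} {S : ℤ}
    (hQ : HasGaussSum Q S) :
    2 * Fintype.card F * (#(nonzeroSquareLocus Q) : ℤ)
      = (Fintype.card V - S) * (Fintype.card F - 1) := by
  classical
  have h := hQ fun a => (1 : MulChar F ℤ) a + quadraticChar F a
  simp only [one_add_quadraticChar_comp_eq_ite, ← mul_sum, sum_boole, filter_mem_eq_inter,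
    univ_inter] at h
  rw [sum_add_distrib, sum_one_mulChar_apply, quadraticChar_sum_zero hF, MulChar.map_zero,
    MulChar.map_zero] at h
  linear_combination h

variable [AddCommGroup V] [Module F V] [DecidableEq V] {Q : QuadraticForm F V} {S : ℤ}

lemma HasGaussSum.pdsCountAdd_nonzeroSquareLocus (hF : ringChar F ≠ 2) (hQ : HasGaussSum Q S)
    {x : V} (hx : Q.polarBilin x ≠ 0) :
    4 * (Fintype.card F : ℤ) ^ 2 * pdsCountAdd (nonzeroSquareLocus Q) x
      = Fintype.card V * (Fintype.card F - 1) ^ 2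
        - 2 * S * Fintype.card F * (Fintype.card F - 1)
        + 4 * S * Fintype.card F * if x ∈ nonzeroSquareLocus Q then 1 else 0 := by
  have hχ := (quadraticChar_ne_one hF).symm
  have count_eq : 4 * (pdsCountAdd (nonzeroSquareLocus Q) x : ℤ)
      = ∑ χ ∈ {1, quadraticChar F}, ∑ φ ∈ {1, quadraticChar F}, ∑ y, χ (Q y) * φ (Q (x + y)) := by
    rw [pdsCountAdd_eq_card_filter, ← sum_boole, mul_sum]
    simp only [sum_pair hχ, ← sum_add_distrib]
    refine sum_congr rfl fun y _ => ?_
    have hy := one_add_quadraticChar_comp_eq_ite Q y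
    have hxy := one_add_quadraticChar_comp_eq_ite Q (x + y)
    rw [ite_and, ← mul_boole]
    linear_combination (-2 * if x + y ∈ nonzeroSquareLocus Q then (1 : ℤ) else 0) * hy
      - ((1 : MulChar F ℤ) (Q y) + quadraticChar F (Q y)) * hxy
  have sum_chars : ∑ χ ∈ {1, quadraticChar F}, ∑ φ ∈ {1, quadraticChar F},
      (∑ a, χ a) * ∑ b, φ b = ((Fintype.card F : ℤ) - 1) ^ 2 := by
    simp only [sum_pair hχ, sum_one_mulChar_apply, quadraticChar_sum_zero hF]
    ring
  have key : (Fintype.card F : ℤ) ^ 2 * (4 * pdsCountAdd (nonzeroSquareLocus Q) x)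
      = (Fintype.card V - S * Fintype.card F) * (Fintype.card F - 1) ^ 2
        + S * Fintype.card F * ((Fintype.card F - 1) * (Fintype.card F - 3)
          + 2 * ((1 : MulChar F ℤ) (Q x) + quadraticChar F (Q x))) := by
    rw [count_eq, ← sum_jacobiSum_mul_sum_mulChar hF, ← sum_chars]
    simp only [sum_pair hχ]
    have pair_sum := hQ.sum_mulChar_mul_mulChar hx
    linear_combination pair_sum 1 1 + pair_sum 1 (quadraticChar F)
      + pair_sum (quadraticChar F) 1 + pair_sum (quadraticChar F) (quadraticChar F)
  rw [one_add_quadraticChar_comp_eq_ite] at key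
  linear_combination key

lemma HasGaussSum.isRegularAddPDS_nonzeroSquareLocus (hF : ringChar F ≠ 2) {m : ℕ}
    (hm : m ≠ 0) (hV : Fintype.card V = Fintype.card F ^ (2 * m)) {ε : ℤ}
    (hQ : HasGaussSum Q (ε * Fintype.card F ^ m)) (hnd : Q.polarBilin.SeparatingLeft) :
    IsRegularAddPDS (nonzeroSquareLocus Q) ((Fintype.card F : ℤ) ^ (2 * m))
      (((Fintype.card F : ℤ) - 1) * ((Fintype.card F : ℤ) ^ m - ε)
        * (Fintype.card F : ℤ) ^ (m - 1) / 2)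
      ((Fintype.card F : ℤ) ^ (m - 1) * ((Fintype.card F : ℤ) - 1)
        * ((Fintype.card F : ℤ) ^ m - (Fintype.card F : ℤ) ^ (m - 1) - 2 * ε) / 4
        + ε * (Fintype.card F : ℤ) ^ (m - 1))
      ((Fintype.card F : ℤ) ^ (m - 1) * ((Fintype.card F : ℤ) - 1)
        * ((Fintype.card F : ℤ) ^ m - (Fintype.card F : ℤ) ^ (m - 1) - 2 * ε) / 4) := by
  have card_ne : (Fintype.card F : ℤ) ≠ 0 := Nat.cast_ne_zero.mpr Fintype.card_ne_zero
  obtain ⟨k, rfl⟩ := Nat.exists_eq_add_one_of_ne_zero hm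
  have card_locus : 2 * (#(nonzeroSquareLocus Q) : ℤ) = ((Fintype.card F : ℤ) - 1)
      * ((Fintype.card F : ℤ) ^ (k + 1) - ε) * (Fintype.card F : ℤ) ^ k := by
    have h := hQ.card_nonzeroSquareLocus hF
    rw [hV] at h
    push_cast at h
    apply mul_left_cancel₀ card_ne
    linear_combination h
  have count {x : V} (hx : x ≠ 0) : 4 * (pdsCountAdd (nonzeroSquareLocus Q) x : ℤ)
      = (Fintype.card F : ℤ) ^ k * ((Fintype.card F : ℤ) - 1)
          * ((Fintype.card F : ℤ) ^ (k + 1) - (Fintype.card F : ℤ) ^ k - 2 * ε)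
        + 4 * (ε * Fintype.card F ^ k * if x ∈ nonzeroSquareLocus Q then 1 else 0) := by
    have h := hQ.pdsCountAdd_nonzeroSquareLocus hF
      fun h0 => hx (LinearMap.separatingLeft_iff_linear_nontrivial.mp hnd x h0)
    rw [hV] at h
    push_cast at h
    apply mul_left_cancel₀ (pow_ne_zero 2 card_ne)
    linear_combination h
  have zero_notMem : (0 : V) ∉ nonzeroSquareLocus Q := by
    simp +contextual [nonzeroSquareLocus, eq_comm (a := (0 : F))]
  refine ⟨mod_cast hV, ?_, zero_notMem, ?_, fun x hx => ?_, fun x hx0 hx => ?_⟩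
  · simp only [Nat.add_sub_cancel]
    omega
  · simp [nonzeroSquareLocus, QuadraticMap.map_neg]
  · have h := count (ne_of_mem_of_not_mem hx zero_notMem)
    rw [if_pos hx, mul_one] at h
    simp only [Nat.add_sub_cancel]
    omega
  · have h := count hx0
    rw [if_neg hx, mul_zero] at h
    simp only [Nat.add_sub_cancel]
    omega

end PartialDifferenceSet

theorem stmt7_general {F V : Type*} [Field F] [Fintype F] [DecidableEq F] [AddCommGroup V]
    [Module F V] [Fintype V] [DecidableEq V] (hodd : Odd (Fintype.card F)) {m : ℕ} (hm : m ≠ 0)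
    {ε : ℤ} {Q : QuadraticForm F V} (hnd : Q.polarBilin.SeparatingLeft)
    (htype : (ε = 1 ∧ ∃ e : (Fin (2 * m) → F) ≃ₗ[F] V, ∀ x, Q (e x) = hypForm F m x) ∨
      (ε = -1 ∧ ∃ b : F, (¬ ∃ c : F, -b = c ^ 2) ∧
        ∃ e : (Fin (2 * m) → F) ≃ₗ[F] V, ∀ x, Q (e x) = ellForm F m b x)) :
    IsRegularAddPDS (nonzeroSquareLocus Q) ((Fintype.card F : ℤ) ^ (2 * m))
      (((Fintype.card F : ℤ) - 1) * ((Fintype.card F : ℤ) ^ m - ε)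
        * (Fintype.card F : ℤ) ^ (m - 1) / 2)
      ((Fintype.card F : ℤ) ^ (m - 1) * ((Fintype.card F : ℤ) - 1)
        * ((Fintype.card F : ℤ) ^ m - (Fintype.card F : ℤ) ^ (m - 1) - 2 * ε) / 4
        + ε * (Fintype.card F : ℤ) ^ (m - 1))
      ((Fintype.card F : ℤ) ^ (m - 1) * ((Fintype.card F : ℤ) - 1)
        * ((Fintype.card F : ℤ) ^ m - (Fintype.card F : ℤ) ^ (m - 1) - 2 * ε) / 4) := by
  have hF : ringChar F ≠ 2 := fun h =>
    Nat.not_even_iff_odd.mpr hodd (Nat.even_iff.mpr (FiniteField.even_card_iff_char_two.mp h))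
  have card_eq (e : (Fin (2 * m) → F) ≃ₗ[F] V) : Fintype.card V = Fintype.card F ^ (2 * m) := by
    simp [← Fintype.card_congr e.toEquiv]
  have transport {f : (Fin (2 * m) → F) → F} {S : ℤ} (hf : HasGaussSum f S)
      (e : (Fin (2 * m) → F) ≃ₗ[F] V) (he : ∀ x, Q (e x) = f x) : HasGaussSum Q S := by
    simpa [Function.comp_def, ← he] using hf.comp_equiv e.symm.toEquiv
  rcases htype with ⟨rfl, e, he⟩ | ⟨rfl, b, hb, e, he⟩
  · have hQ : HasGaussSum Q (1 * Fintype.card F ^ m) := by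
      simpa using transport (hasGaussSum_hypForm m) e he
    exact hQ.isRegularAddPDS_nonzeroSquareLocus hF hm (card_eq e) hnd
  · have hQ : HasGaussSum Q (-1 * Fintype.card F ^ m) := by
      simpa using transport (hasGaussSum_ellForm hF hm hb) e he
    exact hQ.isRegularAddPDS_nonzeroSquareLocus hF hm (card_eq e) hnd

/-- the vectors on which a nondegenerate quadratic form of type `ε = ±1` on
`F_q^{2m}` takes a nonzero square value form a regular PDS with the parameters of
`VNO^ε(2m,q)`. -/
theorem stmt7 {F : Type*} [Field F] [Fintype F] [DecidableEq F] (q m : ℕ)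
    (hq : Fintype.card F = q) (hodd : Odd q) (hm : 2 ≤ m) (ε : ℤ) (hε : ε = 1 ∨ ε = -1)
    (Q : (Fin (2 * m) → F) → F)
    (hQhom : ∀ (a : F) (x : Fin (2 * m) → F), Q (a • x) = a ^ 2 * Q x)
    (hadd : ∀ x x' y : Fin (2 * m) → F, polarQ Q (x + x') y = polarQ Q x y + polarQ Q x' y)
    (hsmul : ∀ (a : F) (x y : Fin (2 * m) → F), polarQ Q (a • x) y = a * polarQ Q x y)
    (hnd : ∀ x : Fin (2 * m) → F, (∀ y, polarQ Q x y = 0) → x = 0)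
    (htype :
      (ε = 1 ∧ ∃ e : (Fin (2 * m) → F) ≃ₗ[F] (Fin (2 * m) → F),
          ∀ x, Q (e x) = hypForm F m x) ∨
      (ε = -1 ∧ ∃ b : F, (¬ ∃ c : F, -b = c ^ 2) ∧
          ∃ e : (Fin (2 * m) → F) ≃ₗ[F] (Fin (2 * m) → F), ∀ x, Q (e x) = ellForm F m b x)) :
    IsRegularAddPDS
      (Finset.univ.filter (fun x : Fin (2 * m) → F => ∃ a : F, a ≠ 0 ∧ Q x = a ^ 2))
      ((q : ℤ) ^ (2 * m))
      (((q : ℤ) - 1) * ((q : ℤ) ^ m - ε) * (q : ℤ) ^ (m - 1) / 2)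
      ((q : ℤ) ^ (m - 1) * ((q : ℤ) - 1) * ((q : ℤ) ^ m - (q : ℤ) ^ (m - 1) - 2 * ε) / 4
        + ε * (q : ℤ) ^ (m - 1))
      ((q : ℤ) ^ (m - 1) * ((q : ℤ) - 1) * ((q : ℤ) ^ m - (q : ℤ) ^ (m - 1) - 2 * ε) / 4) := by
  subst hq
  exact stmt7_general (Q := QuadraticMap.ofPolar Q (fun a x => by rw [hQhom, sq, smul_eq_mul])
    hadd hsmul) hodd (by omega) hnd htype
end

section
/- Let p be an odd prime and Ĝ = ⟨x, y : x^{p²} = y^{p²} = 1, yxy⁻¹ = x^{p²−p+1}⟩. Fix 1 ≤ i ≤ p−1 and define P̂ᵢ = (⋃_{j=0}^{p−1} (⟨xy^{j+pi}⟩ ∖ ⟨x^p y^{pj}⟩)) ∪ (⟨x^{pi}y⟩ ∖ ⟨y^p⟩). Then P̂ᵢ is a regular (p⁴, p³−p, 2p²−3p, p²−p)-partial difference set in Ĝ. -/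
open Finset

/-- Number of ways to write `x` as `d₁ * d₂⁻¹` with `d₁, d₂ ∈ D`. -/
def pdsCount {G : Type*} [Group G] [Fintype G] [DecidableEq G] (D : Finset G) (x : G) : ℕ :=
  ((D ×ˢ D).filter (fun p => p.1 * p.2⁻¹ = x)).card

/-- `D` is a regular `(v,k,λ,μ)`-partial difference set in `G`. -/
def IsRegularPDS {G : Type*} [Group G] [Fintype G] [DecidableEq G]
    (D : Finset G) (v k l m : ℤ) : Prop :=
  (Fintype.card G : ℤ) = v ∧ (D.card : ℤ) = k ∧ (1 : G) ∉ D ∧ (∀ d ∈ D, d⁻¹ ∈ D) ∧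
  (∀ x ∈ D, (pdsCount D x : ℤ) = l) ∧
  (∀ x : G, x ≠ 1 → x ∉ D → (pdsCount D x : ℤ) = m)

/-- The cyclic subgroup generated by `g`, as a finset. -/
noncomputable def zpFinset {G : Type*} [Group G] [Fintype G] (g : G) : Finset G :=
  ((Subgroup.zpowers g : Set G)).toFinite.toFinset

/-- `P̂ᵢ = (⋃_{j=0}^{p−1} (⟨xy^{j+pi}⟩ ∖ ⟨x^p y^{pj}⟩)) ∪ (⟨x^{pi}y⟩ ∖ ⟨y^p⟩)`. -/
noncomputable def Phat {G : Type*} [Group G] [Fintype G] [DecidableEq G]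
    (x y : G) (p i : ℕ) : Finset G :=
  ((Finset.range p).biUnion fun j =>
      zpFinset (x * y ^ (j + p * i)) \ zpFinset (x ^ p * y ^ (p * j)))
    ∪ (zpFinset (x ^ (p * i) * y) \ zpFinset (y ^ p))

/-!
Put `L k` for the `p + 1` cyclic groups `⟨x y^{j+pi}⟩` and `⟨x^{pi} y⟩`, and `O = ⟨x^p, y^p⟩`.
Commutators of powers of `x` and `y` are central of order dividing `p`, so for odd `p` the `p`-th
powers of these generators are `x^p y^{pj}` and `y^p`: they generate the `p + 1` lines of the plane
`O ≅ 𝔽_p²`. Hence the `L k` have order `p²`, meet pairwise trivially, and `L k ∩ O` is the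
corresponding line, so that `P̂ᵢ = (⋃ L k) \ O`.

Counting shows that each `1 ≠ g ∈ O` lies in exactly one `L k` and each `g ∉ O` in exactly one
product `L k * O`. With `S = ∑ L k` in `ℤ[G]` this reads `P̂ᵢ = S - O - p` and
`S O = O S = p (G + p O)`, while `O² = p² O` and `S² = p² S + p (p + 1) G`, the latter because
`L j * L k = G` for `j ≠ k`. Expanding the square of `P̂ᵢ` gives the parameters.
-/

open Function

theorem ncard_coe_subgroup {G : Type*} [Group G] (H : Subgroup G) :
    (H : Set G).ncard = Nat.card H :=
  (Nat.card_coe_set_eq _).symm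

section GroupRing

open scoped Pointwise

variable {G : Type*} [Finite G]

/-- The sum `∑ a ∈ A, a` in the integral group ring `ℤ[G]`. -/
noncomputable def setSum (A : Set G) : MonoidAlgebra ℤ G :=
  ∑ a ∈ A.toFinite.toFinset, MonoidAlgebra.single a 1

theorem coeff_setSum (A : Set G) (g : G) [Decidable (g ∈ A)] :
    (setSum A).coeff g = if g ∈ A then 1 else 0 := by
  classical
  simp [setSum, MonoidAlgebra.coeff_sum, Finsupp.finsetSum_apply, Finsupp.single_apply]

variable [Group G]

theorem coeff_setSum_mul_setSum (A B : Set G) (g : G) :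
    (setSum A * setSum B).coeff g = {a ∈ A | a⁻¹ * g ∈ B}.ncard := by
  classical
  have hset : {a ∈ A | a⁻¹ * g ∈ B} =
      ↑(A.toFinite.toFinset.filter fun a => a⁻¹ * g ∈ B) := by ext; simp
  rw [hset, Set.ncard_coe_finset, card_filter, setSum, sum_mul, MonoidAlgebra.coeff_sum,
    Finsupp.finsetSum_apply]
  push_cast
  simp only [MonoidAlgebra.coeff_single_mul_apply, coeff_setSum, one_mul]

theorem lift_one_setSum (A : Set G) : MonoidAlgebra.lift ℤ ℤ G 1 (setSum A) = A.ncard := by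
  simp [setSum, Set.ncard_eq_toFinset_card A]

theorem setSum_mul_setSum_subgroup (H K : Subgroup G) :
    setSum (H : Set G) * setSum (K : Set G) =
      Nat.card (H ⊓ K : Subgroup G) • setSum ((H : Set G) * (K : Set G)) := by
  classical
  ext g
  rw [coeff_setSum_mul_setSum, MonoidAlgebra.coeff_smul_apply, coeff_setSum]
  split_ifs with hg
  · obtain ⟨h, hh, k, hk, rfl⟩ := hg
    have hcoset : {a | a ∈ (H : Set G) ∧ a⁻¹ * (h * k) ∈ (K : Set G)} =
        (h * ·) '' ((H ⊓ K : Subgroup G) : Set G) := by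
      ext a
      simp only [Set.image_mul_left, Set.mem_preimage, Subgroup.coe_inf, Set.mem_inter_iff]
      simp only [SetLike.mem_coe, Set.mem_ofPred_eq, ← mul_assoc,
        Subgroup.mul_mem_cancel_right _ hk, Subgroup.mul_mem_cancel_left _ (inv_mem hh)]
      rw [← inv_mem_iff (x := h⁻¹ * a), mul_inv_rev, inv_inv]
    rw [hcoset, Set.ncard_image_of_injective _ (mul_right_injective h), ncard_coe_subgroup,
      nsmul_eq_mul, mul_one]
  · rw [smul_zero, Nat.cast_eq_zero, Set.ncard_eq_zero, Set.eq_empty_iff_forall_notMem]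
    rintro a ⟨ha, hag⟩
    exact hg ⟨a, ha, a⁻¹ * g, hag, mul_inv_cancel_left a g⟩

theorem card_mul_card_eq_card_inf_mul_ncard (H K : Subgroup G) :
    Nat.card H * Nat.card K =
      Nat.card (H ⊓ K : Subgroup G) * ((H : Set G) * (K : Set G)).ncard := by
  have h := congrArg (MonoidAlgebra.lift ℤ ℤ G 1) (setSum_mul_setSum_subgroup H K)
  rw [map_mul, map_nsmul, lift_one_setSum, lift_one_setSum, lift_one_setSum, ncard_coe_subgroup,
    ncard_coe_subgroup, nsmul_eq_mul] at h
  exact_mod_cast h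

theorem setSum_mul_self_subgroup (H : Subgroup G) :
    setSum (H : Set G) * setSum (H : Set G) = Nat.card H • setSum (H : Set G) := by
  rw [setSum_mul_setSum_subgroup, inf_idem, coe_mul_coe]

theorem setSum_mul_setSum_of_isComplement' {H K : Subgroup G} (h : Subgroup.IsComplement' H K) :
    setSum (H : Set G) * setSum (K : Set G) = setSum Set.univ := by
  rw [setSum_mul_setSum_subgroup, h.isCompl.inf_eq_bot, Subgroup.card_bot, one_smul, h.mul_eq]

theorem coeff_setSum_mul_setSum_inv (H K : Subgroup G) (g : G) :
    (setSum (H : Set G) * setSum (K : Set G)).coeff g⁻¹ =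
      (setSum (K : Set G) * setSum (H : Set G)).coeff g := by
  classical
  have hinv : (g⁻¹ ∈ (H : Set G) * (K : Set G)) ↔ g ∈ (K : Set G) * (H : Set G) := by
    rw [← Set.mem_inv, mul_inv_rev, inv_coe_set, inv_coe_set]
  simp only [setSum_mul_setSum_subgroup, MonoidAlgebra.coeff_smul_apply, coeff_setSum, hinv,
    inf_comm]

end GroupRing

section PDS

variable {G : Type*} [Group G] [Fintype G] [DecidableEq G]

theorem pdsCount_eq_coeff_mul_self {D : Finset G} (hinv : ∀ d ∈ D, d⁻¹ ∈ D) (g : G) :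
    (pdsCount D g : ℤ) = (setSum (D : Set G) * setSum (D : Set G)).coeff g := by
  have hinv' : ∀ d, d⁻¹ ∈ D ↔ d ∈ D := fun d => ⟨fun h => inv_inv d ▸ hinv _ h, hinv d⟩
  have hset : {a ∈ (D : Set G) | a⁻¹ * g ∈ (D : Set G)} = ↑(D.filter fun a => a⁻¹ * g ∈ D) := by
    ext; simp
  rw [coeff_setSum_mul_setSum, hset, Set.ncard_coe_finset, pdsCount, Nat.cast_inj]
  refine card_nbij' Prod.fst (fun a => (a, g⁻¹ * a)) ?_ ?_ ?_ ?_
  · rintro ⟨a, b⟩ h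
    simp only [coe_filter, mem_product, Set.mem_ofPred_eq] at h ⊢
    obtain ⟨⟨ha, hb⟩, rfl⟩ := h
    simpa [hinv'] using ⟨ha, hb⟩
  · intro a h
    simp only [coe_filter, mem_product, Set.mem_ofPred_eq] at h ⊢
    rw [← hinv' (g⁻¹ * a)]
    simpa using h
  · rintro ⟨a, b⟩ h
    simp only [coe_filter, mem_product, Set.mem_ofPred_eq] at h
    simp [← h.2]
  · intro a _
    rfl

theorem isRegularPDS_of_setSum_mul_self {D : Finset G} {v k l m : ℤ}
    (hv : (Fintype.card G : ℤ) = v) (h1 : 1 ∉ D) (hinv : ∀ d ∈ D, d⁻¹ ∈ D)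
    (hD : setSum (D : Set G) * setSum (D : Set G) =
      (k - m) • 1 + (l - m) • setSum (D : Set G) + m • setSum Set.univ) :
    IsRegularPDS D v k l m := by
  classical
  have hcount (g : G) : (pdsCount D g : ℤ) =
      (k - m) * (if g = 1 then 1 else 0) + (l - m) * (if g ∈ D then 1 else 0) + m := by
    rw [pdsCount_eq_coeff_mul_self hinv, hD]
    simp only [MonoidAlgebra.coeff_add, MonoidAlgebra.coeff_smul, Finsupp.add_apply,
      Finsupp.smul_apply, MonoidAlgebra.one_def, MonoidAlgebra.coeff_single, Finsupp.single_apply,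
      coeff_setSum, mem_coe, Set.mem_univ, if_true, smul_eq_mul, mul_one, eq_comm (a := g)]
  have hcard : (D.card : ℤ) = pdsCount D 1 := by
    rw [pdsCount_eq_coeff_mul_self hinv, coeff_setSum_mul_setSum, ← Set.ncard_coe_finset]
    congr 2
    ext d
    simpa using hinv d
  refine ⟨hv, ?_, h1, hinv, fun g hg => ?_, fun g hg1 hg => ?_⟩
  · simp [hcard, hcount, h1]
  · have hg1 : g ≠ 1 := by rintro rfl; exact h1 hg
    simp [hcount, hg, hg1]
  · simp [hcount, hg, hg1]

end PDS

section Partition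

theorem existsUnique_mem_of_ncard_eq {ι α : Type*} [Finite ι] {A : ι → Set α} {B : Set α} {m : ℕ}
    (hB : B.Finite) (hAB : ∀ k, A k ⊆ B) (hdis : Pairwise (Disjoint on A))
    (hA : ∀ k, (A k).ncard = m) (hcard : B.ncard = Nat.card ι * m) {x : α} (hx : x ∈ B) :
    ∃! k, x ∈ A k := by
  have hfin : ∀ k, (A k).Finite := fun k => hB.subset (hAB k)
  have hunion : ⋃ k, A k = B := by
    refine Set.eq_of_subset_of_ncard_le (Set.iUnion_subset hAB) ?_ hB
    have := Fintype.ofFinite ι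
    rw [Set.ncard_iUnion_of_finite hfin hdis, hcard, finsum_eq_sum_of_fintype]
    simp [hA]
  obtain ⟨k, hk⟩ := Set.mem_iUnion.1 (hunion ▸ hx)
  refine ⟨k, hk, fun j hj => ?_⟩
  by_contra hjk
  exact Set.disjoint_left.1 (hdis hjk) hj hk

end Partition

/-- A partial congruence partition of a group of order `n ^ 4` into `n + 1` components `L k` of
order `n ^ 2`, pairwise intersecting trivially, each of which meets the subgroup `O` of order
`n ^ 2` in `n` elements. -/
structure IsPCPThrough {G ι : Type*} [Group G] (L : ι → Subgroup G) (O : Subgroup G) (n : ℕ) :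
    Prop where
  card_group : Nat.card G = n ^ 4
  card_index : Nat.card ι = n + 1
  card_component (k : ι) : Nat.card (L k) = n ^ 2
  card_core : Nat.card O = n ^ 2
  card_inf (k : ι) : Nat.card (L k ⊓ O : Subgroup G) = n
  pairwise_disjoint : Pairwise (Disjoint on L)

namespace IsPCPThrough

open scoped Pointwise

variable {G ι : Type*} [Group G] {L : ι → Subgroup G} {O : Subgroup G} {n : ℕ}

theorem finite_index (h : IsPCPThrough L O n) : Finite ι :=
  Nat.finite_of_card_ne_zero (by simp [h.card_index])

section Finite

variable [Finite G]

theorem pos (h : IsPCPThrough L O n) : 0 < n := by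
  refine Nat.pos_of_ne_zero fun hn => ?_
  exact Nat.card_pos.ne' (h.card_group.trans (by simp [hn]))

theorem isComplement' (h : IsPCPThrough L O n) {j k : ι} (hjk : j ≠ k) :
    Subgroup.IsComplement' (L j) (L k) := by
  refine Subgroup.isComplement'_of_card_mul_and_disjoint ?_ (h.pairwise_disjoint hjk)
  rw [h.card_component, h.card_component, h.card_group]
  ring

theorem inf_mul_inf (h : IsPCPThrough L O n) {j k : ι} (hjk : j ≠ k) :
    ((L j ⊓ O : Subgroup G) : Set G) * ((L k ⊓ O : Subgroup G) : Set G) = O := by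
  refine Set.eq_of_subset_of_ncard_le ?_ ?_
  · exact (Set.mul_subset_mul (by simp) (by simp)).trans (coe_mul_coe O).subset
  · have hcard := card_mul_card_eq_card_inf_mul_ncard (L j ⊓ O) (L k ⊓ O)
    have hbot : L j ⊓ O ⊓ (L k ⊓ O) = ⊥ :=
      ((h.pairwise_disjoint hjk).mono inf_le_left inf_le_left).eq_bot
    rw [h.card_inf, h.card_inf, hbot, Subgroup.card_bot, one_mul, ← sq] at hcard
    rw [← hcard, ← h.card_core, ncard_coe_subgroup]

theorem existsUnique_mem (h : IsPCPThrough L O n) {g : G} (hg : g ∈ O) (hg1 : g ≠ 1) :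
    ∃! k, g ∈ L k := by
  have := h.finite_index
  have key : ∃! k, g ∈ ((L k ⊓ O : Subgroup G) : Set G) \ {1} := by
    refine existsUnique_mem_of_ncard_eq (B := (O : Set G) \ {1}) (m := n - 1) (Set.toFinite _)
      (fun k => Set.sdiff_subset_sdiff_left (by simp)) (fun j k hjk => ?_) (fun k => ?_) ?_
      ⟨hg, hg1⟩
    · refine Set.disjoint_left.2 fun a ha hak => ha.2 ?_
      exact Subgroup.disjoint_def.1 (h.pairwise_disjoint hjk) ha.1.1 hak.1.1
    · rw [Set.ncard_sdiff_singleton_of_mem (one_mem _), ncard_coe_subgroup]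
      exact congrArg (· - 1) (h.card_inf k)
    · rw [Set.ncard_sdiff_singleton_of_mem (one_mem O), ncard_coe_subgroup, h.card_index]
      exact (congrArg (· - 1) h.card_core).trans (Nat.sq_sub_sq n 1)
  simpa [hg, hg1] using key

theorem ncard_mul_core (h : IsPCPThrough L O n) (k : ι) :
    ((L k : Set G) * (O : Set G)).ncard = n ^ 3 := by
  have hcard := card_mul_card_eq_card_inf_mul_ncard (L k) O
  rw [h.card_component, h.card_core, h.card_inf] at hcard
  exact Nat.eq_of_mul_eq_mul_left h.pos (hcard.symm.trans (by ring))

theorem mul_core_inter_mul_core (h : IsPCPThrough L O n) {j k : ι} (hjk : j ≠ k) :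
    ((L j : Set G) * (O : Set G)) ∩ ((L k : Set G) * (O : Set G)) ⊆ O := by
  rintro _ ⟨⟨a, ha, o, ho, rfl⟩, ⟨b, hb, o', ho', hab⟩⟩
  have hmem : a⁻¹ * b ∈ (O : Set G) := by
    have : a⁻¹ * b = o * o'⁻¹ := by
      rw [inv_mul_eq_iff_eq_mul, ← mul_assoc, eq_mul_inv_iff_mul_eq]
      exact hab
    exact this ▸ mul_mem ho (inv_mem ho')
  rw [← h.inf_mul_inf hjk] at hmem
  obtain ⟨c, hc, d, hd, hcd⟩ := hmem
  have hpair := Subgroup.mul_injective_of_disjoint (h.pairwise_disjoint hjk)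
    (a₁ := (⟨c, hc.1⟩, ⟨d, hd.1⟩)) (a₂ := (⟨a⁻¹, inv_mem ha⟩, ⟨b, hb⟩)) hcd
  have hca : c = a⁻¹ := congrArg (fun q => (q.1 : G)) hpair
  exact mul_mem (inv_mem_iff.1 (hca ▸ hc.2)) ho

theorem existsUnique_mem_mul_core (h : IsPCPThrough L O n) {g : G} (hg : g ∉ O) :
    ∃! k, g ∈ (L k : Set G) * (O : Set G) := by
  have := h.finite_index
  have hsub (k : ι) : (O : Set G) ⊆ (L k : Set G) * (O : Set G) :=
    Set.subset_mul_right _ (one_mem (L k))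
  have hO : (O : Set G).ncard = n ^ 2 := (ncard_coe_subgroup O).trans h.card_core
  have key : ∃! k, g ∈ ((L k : Set G) * (O : Set G)) \ O := by
    refine existsUnique_mem_of_ncard_eq (B := (O : Set G)ᶜ) (m := n ^ 3 - n ^ 2) (Set.toFinite _)
      (fun k => Set.sdiff_subset_compl _ _) (fun j k hjk => ?_) (fun k => ?_) ?_ hg
    · refine Set.disjoint_left.2 fun a ha hak => ha.2 ?_
      exact h.mul_core_inter_mul_core hjk ⟨ha.1, hak.1⟩
    · rw [Set.ncard_sdiff (hsub k), h.ncard_mul_core, hO]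
    · rw [Set.ncard_compl, hO, h.card_group, h.card_index, Nat.mul_sub]
      rw [show (n + 1) * n ^ 3 = n ^ 4 + n ^ 3 by ring,
        show (n + 1) * n ^ 2 = n ^ 2 + n ^ 3 by ring, Nat.add_sub_add_right]
  simpa [hg] using key

section Sum

variable [Fintype ι]

theorem sum_mul_sum (h : IsPCPThrough L O n) :
    (∑ k, setSum (L k : Set G)) * ∑ k, setSum (L k : Set G) =
      n ^ 2 • ∑ k, setSum (L k : Set G) + ((n + 1) * n) • setSum Set.univ := by
  classical
  have hrow (j : ι) : ∑ k, setSum (L j : Set G) * setSum (L k : Set G) =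
      n ^ 2 • setSum (L j : Set G) + n • setSum Set.univ := by
    have hcompl : ∀ k ∈ univ.erase j,
        setSum (L j : Set G) * setSum (L k : Set G) = setSum Set.univ := fun k hk =>
      setSum_mul_setSum_of_isComplement' (h.isComplement' (ne_of_mem_erase hk).symm)
    rw [← add_sum_erase _ _ (mem_univ j), setSum_mul_self_subgroup, h.card_component,
      sum_congr rfl hcompl, sum_const, card_erase_of_mem (mem_univ j), card_univ,
      ← Nat.card_eq_fintype_card, h.card_index, Nat.add_sub_cancel]
  rw [Fintype.sum_mul_sum, sum_congr rfl fun j _ => hrow j, sum_add_distrib, ← smul_sum, sum_const,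
    card_univ, ← Nat.card_eq_fintype_card, h.card_index, smul_smul]

theorem sum_setSum_mul_core (h : IsPCPThrough L O n) :
    ∑ k, setSum ((L k : Set G) * (O : Set G)) = setSum Set.univ + n • setSum (O : Set G) := by
  classical
  ext g
  simp only [MonoidAlgebra.coeff_sum, Finsupp.finsetSum_apply, MonoidAlgebra.coeff_add,
    Finsupp.add_apply, MonoidAlgebra.coeff_smul_apply, coeff_setSum, Set.mem_univ, if_true]
  by_cases hg : g ∈ O
  · have hmem (k : ι) : g ∈ (L k : Set G) * (O : Set G) :=
      Set.subset_mul_right _ (one_mem (L k)) hg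
    simp [hmem, hg, ← Nat.card_eq_fintype_card, h.card_index, add_comm]
  · rw [sum_boole, (Fintype.existsUnique_iff_card_one _).1 (h.existsUnique_mem_mul_core hg)]
    simp [hg]

theorem sum_mul_core (h : IsPCPThrough L O n) :
    (∑ k, setSum (L k : Set G)) * setSum (O : Set G) =
      n • (setSum Set.univ + n • setSum (O : Set G)) := by
  simp only [sum_mul, setSum_mul_setSum_subgroup, h.card_inf, ← smul_sum, h.sum_setSum_mul_core]

theorem core_mul_sum (h : IsPCPThrough L O n) :
    setSum (O : Set G) * ∑ k, setSum (L k : Set G) =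
      n • (setSum Set.univ + n • setSum (O : Set G)) := by
  classical
  ext g
  have hcoeff : (setSum (O : Set G) * ∑ k, setSum (L k : Set G)).coeff g =
      ((∑ k, setSum (L k : Set G)) * setSum (O : Set G)).coeff g⁻¹ := by
    simp only [mul_sum, sum_mul, MonoidAlgebra.coeff_sum, Finsupp.finsetSum_apply,
      coeff_setSum_mul_setSum_inv]
  rw [hcoeff, h.sum_mul_core]
  simp only [MonoidAlgebra.coeff_smul_apply, MonoidAlgebra.coeff_add, Finsupp.add_apply,
    coeff_setSum, Set.mem_univ, SetLike.mem_coe, inv_mem_iff]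

theorem setSum_iUnion_sdiff (h : IsPCPThrough L O n) :
    setSum ((⋃ k, (L k : Set G)) \ O) =
      ∑ k, setSum (L k : Set G) - setSum (O : Set G) - n • 1 := by
  classical
  ext g
  simp only [MonoidAlgebra.coeff_sum, Finsupp.finsetSum_apply, MonoidAlgebra.coeff_sub,
    Finsupp.sub_apply, MonoidAlgebra.coeff_smul_apply, coeff_setSum, MonoidAlgebra.one_def,
    MonoidAlgebra.coeff_single, Finsupp.single_apply, Set.mem_sdiff, Set.mem_iUnion,
    SetLike.mem_coe]
  rcases eq_or_ne g 1 with rfl | hg1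
  · simp [← Nat.card_eq_fintype_card, h.card_index]
  by_cases hg : g ∈ O
  · rw [sum_boole, (Fintype.existsUnique_iff_card_one _).1 (h.existsUnique_mem hg hg1)]
    simp [hg, hg1.symm]
  by_cases hgL : ∃ k, g ∈ L k
  · have huniq : ∃! k, g ∈ L k := by
      obtain ⟨k, hk⟩ := hgL
      refine ⟨k, hk, fun j hj => by_contra fun hjk => hg1 ?_⟩
      exact Subgroup.disjoint_def.1 (h.pairwise_disjoint hjk) hj hk
    rw [sum_boole, (Fintype.existsUnique_iff_card_one _).1 huniq]
    simp [hg, hgL, hg1.symm]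
  · push Not at hgL
    simp [hg, hgL, hg1.symm]

end Sum

end Finite

theorem isRegularPDS [Fintype G] [DecidableEq G] (h : IsPCPThrough L O n) {D : Finset G}
    (hD : (D : Set G) = (⋃ k, (L k : Set G)) \ O) :
    IsRegularPDS D ((n : ℤ) ^ 4) ((n : ℤ) ^ 3 - n) (2 * (n : ℤ) ^ 2 - 3 * n)
      ((n : ℤ) ^ 2 - n) := by
  have := h.finite_index
  have := Fintype.ofFinite ι
  have hmem (d : G) : d ∈ D ↔ (∃ k, d ∈ L k) ∧ d ∉ O := by
    rw [← mem_coe, hD]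
    simp
  have hcore : setSum (O : Set G) * setSum (O : Set G) = n ^ 2 • setSum (O : Set G) :=
    (setSum_mul_self_subgroup O).trans (by rw [h.card_core])
  refine isRegularPDS_of_setSum_mul_self ?_ ?_ ?_ ?_
  · rw [← Nat.card_eq_fintype_card, h.card_group, Nat.cast_pow]
  · simp [hmem]
  · simp [hmem]
  · rw [hD, h.setSum_iUnion_sdiff]
    simp only [sub_mul, mul_sub, smul_mul_assoc, mul_smul_comm, one_mul, mul_one,
      h.sum_mul_sum, h.sum_mul_core, h.core_mul_sum, hcore]
    module

end IsPCPThrough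

section ClassTwo

variable {M : Type*} [Monoid M] {g h z : M}

theorem pow_mul_eq_mul_pow_mul_pow (hgh : h * g = g * h * z) (hz : Commute z h) (n : ℕ) :
    h ^ n * g = g * h ^ n * z ^ n := by
  induction n with
  | zero => simp
  | succ n ih =>
    calc h ^ (n + 1) * g = h ^ n * g * h * z := by rw [pow_succ, mul_assoc, hgh]; group
      _ = g * h ^ n * (z ^ n * h) * z := by rw [ih]; simp only [mul_assoc]
      _ = g * h ^ (n + 1) * z ^ (n + 1) := by
        rw [(hz.pow_left n).eq, pow_succ h, pow_succ z]
        simp only [mul_assoc]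

theorem mul_pow_eq_pow_mul_pow_mul_pow_choose (hgh : h * g = g * h * z) (hzg : Commute z g)
    (hzh : Commute z h) (n : ℕ) : (g * h) ^ n = g ^ n * h ^ n * z ^ n.choose 2 := by
  induction n with
  | zero => simp
  | succ n ih =>
    calc (g * h) ^ (n + 1) = g ^ n * h ^ n * (z ^ n.choose 2 * (g * h)) := by
          rw [pow_succ, ih, mul_assoc]
      _ = g ^ n * (h ^ n * g) * h * z ^ n.choose 2 := by
        rw [((hzg.mul_right hzh).pow_left _).eq]
        simp only [mul_assoc]
      _ = g ^ n * g * h ^ n * (z ^ n * h) * z ^ n.choose 2 := by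
        rw [pow_mul_eq_mul_pow_mul_pow hgh hzh]
        simp only [mul_assoc]
      _ = g ^ (n + 1) * h ^ (n + 1) * z ^ (n + 1).choose 2 := by
        rw [(hzh.pow_left n).eq, Nat.choose_succ_succ' n 1, Nat.choose_one_right, pow_add z,
          pow_succ g, pow_succ h]
        simp only [mul_assoc, Nat.reduceAdd]

theorem mul_pow_prime_of_pow_eq_one {p : ℕ} (hp : p.Prime) (hodd : Odd p)
    (hgh : h * g = g * h * z) (hzg : Commute z g) (hzh : Commute z h) (hz : z ^ p = 1) :
    (g * h) ^ p = g ^ p * h ^ p := by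
  have hlt : 2 < p := lt_of_le_of_ne hp.two_le fun h2 => by
    rw [← h2] at hodd
    exact absurd hodd (by decide)
  obtain ⟨c, hc⟩ := hp.dvd_choose_self two_ne_zero hlt
  rw [mul_pow_eq_pow_mul_pow_mul_pow_choose hgh hzg hzh, hc, pow_mul, hz, one_pow, mul_one]

end ClassTwo

section Zpowers

open Subgroup
open scoped Pointwise

variable {G : Type*} [Group G]

theorem orderOf_pow_of_orderOf_eq_mul {c : G} {m n : ℕ} (hn : n ≠ 0) (hc : orderOf c = n * m) :
    orderOf (c ^ n) = m := by
  rw [orderOf_pow_of_dvd hn (hc ▸ dvd_mul_right n m), hc,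
    Nat.mul_div_cancel_left _ (Nat.pos_of_ne_zero hn)]

theorem mem_zpowers_pow_of_pow_eq_one {c g : G} {m n : ℕ} (hm : m ≠ 0) (hc : orderOf c = n * m)
    (hg : g ∈ zpowers c) (hgm : g ^ m = 1) : g ∈ zpowers (c ^ n) := by
  obtain ⟨t, rfl⟩ := mem_zpowers_iff.1 hg
  rw [← zpow_natCast, ← zpow_mul, ← orderOf_dvd_iff_zpow_eq_one, hc, Nat.cast_mul] at hgm
  obtain ⟨s, rfl⟩ := Int.dvd_of_mul_dvd_mul_right (Nat.cast_ne_zero.2 hm) hgm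
  exact mem_zpowers_iff.2 ⟨s, by rw [zpow_mul, zpow_natCast]⟩

theorem zpowers_inf_eq_zpowers_pow {c : G} {m n : ℕ} {H : Subgroup G} (hm : m ≠ 0)
    (hc : orderOf c = n * m) (hcH : c ^ n ∈ H) (hH : ∀ g ∈ H, g ^ m = 1) :
    zpowers c ⊓ H = zpowers (c ^ n) := by
  refine le_antisymm (fun g hg => ?_) (le_inf ?_ ?_)
  · exact mem_zpowers_pow_of_pow_eq_one hm hc hg.1 (hH g hg.2)
  · exact zpowers_le.2 (npow_mem_zpowers c n)
  · exact zpowers_le.2 hcH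

theorem disjoint_zpowers_of_disjoint_zpowers_pow {c d : G} {n : ℕ} (hn : n ≠ 0)
    (hc : orderOf c = n * n) (hd : orderOf d = n * n)
    (h : Disjoint (zpowers (c ^ n)) (zpowers (d ^ n))) : Disjoint (zpowers c) (zpowers d) := by
  have hpow {e g : G} (hg : g ∈ zpowers e) : g ^ n ∈ zpowers (e ^ n) := by
    obtain ⟨t, rfl⟩ := mem_zpowers_iff.1 hg
    exact mem_zpowers_iff.2 ⟨t, by rw [← zpow_natCast, ← zpow_natCast, zpow_comm]⟩
  refine disjoint_def.2 fun {g} hgc hgd => ?_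
  have hgn : g ^ n = 1 := disjoint_def.1 h (hpow hgc) (hpow hgd)
  exact disjoint_def.1 h (mem_zpowers_pow_of_pow_eq_one hn hc hgc hgn)
    (mem_zpowers_pow_of_pow_eq_one hn hd hgd hgn)

theorem coe_zpowers_mul_zpowers [Finite G] {a b : G} (h : a * b * a⁻¹ ∈ zpowers b) :
    (zpowers a : Set G) * (zpowers b : Set G) = (zpowers a ⊔ zpowers b : Subgroup G) := by
  refine (coe_mul_of_left_le_normalizer_right _ _ (zpowers_le.2 ?_)).symm
  rw [mem_normalizer_iff_map_conj_eq]
  refine eq_of_le_of_card_ge ?_ ?_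
  · rw [MonoidHom.map_zpowers]
    exact zpowers_le.2 h
  · exact (card_map_of_injective (MulAut.conj a).injective).ge

theorem orderOf_eq_and_disjoint_of_closure_pair_eq_top [Finite G] {a b : G} {m n : ℕ}
    (ha : a ^ m = 1) (hb : b ^ n = 1) (hab : a * b * a⁻¹ ∈ zpowers b)
    (hgen : closure {a, b} = ⊤) (hcard : Nat.card G = m * n) :
    orderOf a = m ∧ orderOf b = n ∧ Disjoint (zpowers a) (zpowers b) := by
  have hmn : 0 < m * n := hcard ▸ Nat.card_pos
  have ham : orderOf a ≤ m := orderOf_le_of_pow_eq_one (Nat.pos_of_mul_pos_right hmn) ha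
  have hbn : orderOf b ≤ n := orderOf_le_of_pow_eq_one (Nat.pos_of_mul_pos_left hmn) hb
  have htop : zpowers a ⊔ zpowers b = ⊤ := by
    rw [← hgen, zpowers_eq_closure, zpowers_eq_closure, ← Subgroup.closure_union,
      Set.singleton_union]
  have hprod := card_mul_card_eq_card_inf_mul_ncard (zpowers a) (zpowers b)
  rw [coe_zpowers_mul_zpowers hab, htop, coe_top, Set.ncard_univ, hcard, Nat.card_zpowers,
    Nat.card_zpowers] at hprod
  have hpos : 0 < Nat.card (zpowers a ⊓ zpowers b : Subgroup G) := Nat.card_pos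
  have hinf : Nat.card (zpowers a ⊓ zpowers b : Subgroup G) = 1 := by
    nlinarith [Nat.mul_le_mul ham hbn]
  rw [hinf, one_mul] at hprod
  obtain ⟨ham', hbn'⟩ := (mul_eq_mul_iff_eq_and_eq_of_pos ham hbn (orderOf_pos a)
    (Nat.pos_of_mul_pos_left hmn)).1 hprod
  exact ⟨ham', hbn', disjoint_iff.2 (card_eq_one.1 hinf)⟩

end Zpowers

section CommutingPair

open Subgroup
open scoped Pointwise

variable {G : Type*} [Group G] {a b : G} {p : ℕ}

theorem coe_zpowers_mul_zpowers_of_commute [Finite G] (hab : Commute a b) :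
    (zpowers a : Set G) * (zpowers b : Set G) = (zpowers a ⊔ zpowers b : Subgroup G) :=
  coe_zpowers_mul_zpowers (by simp [hab.eq])

theorem pow_eq_one_of_mem_zpowers_sup [Finite G] (hab : Commute a b) {n : ℕ} (ha : a ^ n = 1)
    (hb : b ^ n = 1) {g : G} (hg : g ∈ zpowers a ⊔ zpowers b) : g ^ n = 1 := by
  rw [← SetLike.mem_coe, ← coe_zpowers_mul_zpowers_of_commute hab] at hg
  obtain ⟨_, ⟨s, rfl⟩, _, ⟨t, rfl⟩, rfl⟩ := hg
  calc (a ^ s * b ^ t) ^ n = (a ^ n) ^ s * (b ^ n) ^ t := by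
        rw [(hab.zpow_zpow s t).mul_pow]
        simp only [← zpow_natCast, zpow_comm]
    _ = 1 := by rw [ha, hb, one_zpow, one_zpow, one_mul]

theorem card_zpowers_sup [Finite G] (hab : Commute a b)
    (hdis : Disjoint (zpowers a) (zpowers b)) :
    Nat.card (zpowers a ⊔ zpowers b : Subgroup G) = orderOf a * orderOf b := by
  have hprod := card_mul_card_eq_card_inf_mul_ncard (zpowers a) (zpowers b)
  rw [coe_zpowers_mul_zpowers_of_commute hab, hdis.eq_bot, card_bot, one_mul, Nat.card_zpowers,
    Nat.card_zpowers, ncard_coe_subgroup] at hprod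
  exact hprod.symm

theorem disjoint_zpowers_zpow_mul_zpow (hp : p.Prime) (hab : Commute a b)
    (hdis : Disjoint (zpowers a) (zpowers b)) (ha : orderOf a = p) (hb : orderOf b = p)
    {s t u v : ℤ} (hdet : ¬ (p : ℤ) ∣ s * v - u * t) :
    Disjoint (zpowers (a ^ s * b ^ t)) (zpowers (a ^ u * b ^ v)) := by
  refine disjoint_def.2 fun {g} hg hg' => ?_
  obtain ⟨m, rfl⟩ := mem_zpowers_iff.1 hg
  obtain ⟨n, hn⟩ := mem_zpowers_iff.1 hg'
  have hpow (q r k : ℤ) : (a ^ q * b ^ r) ^ k = a ^ (q * k) * b ^ (r * k) := by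
    rw [(hab.zpow_zpow q r).mul_zpow, zpow_mul, zpow_mul]
  have hone : a ^ (-(u * n) + s * m) * b ^ (t * m - v * n) = 1 := by
    rw [hpow, hpow] at hn
    rw [zpow_add, zpow_sub, zpow_neg, mul_assoc, ← mul_assoc (a ^ (s * m)), ← hn]
    group
  obtain ⟨hone_a, hone_b⟩ := disjoint_iff_mul_eq_one.1 hdis (zpow_mem_zpowers a _)
    (zpow_mem_zpowers b _) hone
  rw [← orderOf_dvd_iff_zpow_eq_one, ha] at hone_a
  rw [← orderOf_dvd_iff_zpow_eq_one, hb] at hone_b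
  have hdvd : (p : ℤ) ∣ (s * v - u * t) * m := by
    have := (hone_a.mul_left v).sub (hone_b.mul_left u)
    ring_nf at this ⊢
    exact this
  have hm := ((Nat.prime_iff_prime_int.1 hp).dvd_or_dvd hdvd).resolve_left hdet
  rw [hpow, orderOf_dvd_iff_zpow_eq_one.1 (ha ▸ hm.mul_left s),
    orderOf_dvd_iff_zpow_eq_one.1 (hb ▸ hm.mul_left t), one_mul]

/-- Generators of the `p + 1` lines (subgroups of order `p`) of the elementary abelian group
`⟨a, b⟩` of order `p ^ 2`: the finite slope `j` gives `a * b ^ j`, the infinite one `none`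
gives `b`. -/
def lineGenerator (a b : G) : Option (Fin p) → G
  | none => b
  | some j => a * b ^ (j : ℕ)

theorem lineGenerator_mem_sup (k : Option (Fin p)) :
    lineGenerator a b k ∈ zpowers a ⊔ zpowers b := by
  have ha : a ∈ zpowers a ⊔ zpowers b := mem_sup_left (mem_zpowers a)
  have hb : b ∈ zpowers a ⊔ zpowers b := mem_sup_right (mem_zpowers b)
  cases k with
  | none => exact hb
  | some j => exact mul_mem ha (pow_mem hb j)

theorem lineGenerator_ne_one (hdis : Disjoint (zpowers a) (zpowers b)) (ha : a ≠ 1) (hb : b ≠ 1)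
    (k : Option (Fin p)) : lineGenerator a b k ≠ 1 := by
  cases k with
  | none => exact hb
  | some j =>
    exact fun h => ha (disjoint_iff_mul_eq_one.1 hdis (mem_zpowers a) (npow_mem_zpowers b j) h).1

theorem pairwise_disjoint_zpowers_lineGenerator (hp : p.Prime) (hab : Commute a b)
    (hdis : Disjoint (zpowers a) (zpowers b)) (ha : orderOf a = p) (hb : orderOf b = p) :
    Pairwise (Disjoint on fun k : Option (Fin p) => zpowers (lineGenerator a b k)) := by
  have hp1 : ¬ (p : ℤ) ∣ 1 := (Nat.prime_iff_prime_int.1 hp).not_dvd_one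
  have hdisj (s t u v : ℤ) := disjoint_zpowers_zpow_mul_zpow hp hab hdis ha hb
    (s := s) (t := t) (u := u) (v := v)
  rintro (_ | j) (_ | k) hjk
  · exact absurd rfl hjk
  · simpa [onFun, lineGenerator, hp1] using hdisj 0 1 1 k
  · simpa [onFun, lineGenerator, hp1] using hdisj 1 j 0 1
  · have hdet : ¬ (p : ℤ) ∣ 1 * k - 1 * j := fun hdvd => hjk <| by
      rw [one_mul, one_mul] at hdvd
      have hmod : (j : ℕ) ≡ k [MOD p] := Nat.modEq_iff_dvd.2 hdvd
      exact congrArg some (Fin.ext (hmod.eq_of_lt_of_lt j.2 k.2))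
    simpa [onFun, lineGenerator] using hdisj 1 j 1 k hdet

end CommutingPair

theorem isPCPThrough_zpowers {G ι : Type*} [Group G] [Finite G] {c : ι → G} {O : Subgroup G}
    {n : ℕ} (hG : Nat.card G = n ^ 4) (hι : Nat.card ι = n + 1) (hO : Nat.card O = n ^ 2)
    (hexp : ∀ g ∈ O, g ^ n = 1) (hc : ∀ k, orderOf (c k) = n ^ 2) (hcO : ∀ k, c k ^ n ∈ O)
    (hdis : Pairwise (Disjoint on fun k => Subgroup.zpowers (c k ^ n))) :
    IsPCPThrough (fun k => Subgroup.zpowers (c k)) O n := by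
  have hn : n ≠ 0 := by
    rintro rfl
    exact Nat.card_pos.ne' hG
  have hcn (k : ι) : orderOf (c k) = n * n := (hc k).trans (sq n)
  exact
    { card_group := hG
      card_index := hι
      card_component := fun k => (Nat.card_zpowers _).trans (hc k)
      card_core := hO
      card_inf := fun k => by
        rw [zpowers_inf_eq_zpowers_pow hn (hcn k) (hcO k) hexp, Nat.card_zpowers,
          orderOf_pow_of_orderOf_eq_mul hn (hcn k)]
      pairwise_disjoint := fun j k hjk =>
        disjoint_zpowers_of_disjoint_zpowers_pow hn (hcn j) (hcn k) (hdis hjk) }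

/-- The elements `x`, `y` generate a group isomorphic to the metacyclic group
`⟨x, y : x^{p²} = y^{p²} = 1, yxy⁻¹ = x^{pc+1}⟩`, of which `Ĝ` is the case `c = p - 1`; the order
`p ^ 4` excludes proper quotients. -/
structure IsMetacyclicPair {G : Type*} [Group G] (p c : ℕ) (x y : G) : Prop where
  pow_x : x ^ (p ^ 2) = 1
  pow_y : y ^ (p ^ 2) = 1
  conj : y * x * y⁻¹ = x ^ (p * c + 1)
  closure_eq_top : Subgroup.closure {x, y} = ⊤
  card_eq : Nat.card G = p ^ 4

/-- Generators of the components `⟨x y^{j+pi}⟩` (`some j`) and `⟨x^{pi} y⟩` (`none`) whose union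
contains `P̂ᵢ`. -/
def componentGenerator {G : Type*} [Group G] (x y : G) {p : ℕ} (i : ℕ) : Option (Fin p) → G
  | none => x ^ (p * i) * y
  | some j => x * y ^ ((j : ℕ) + p * i)

namespace IsMetacyclicPair

open Subgroup

variable {G : Type*} [Group G] {p c : ℕ} {x y : G}

theorem commute_pow_x_y (h : IsMetacyclicPair p c x y) : Commute (x ^ p) y := by
  have hexp : (p * c + 1) * p = p ^ 2 * c + p := by ring
  have hconj : y * x ^ p * y⁻¹ = x ^ p := by
    rw [← conj_pow, h.conj, ← pow_mul, hexp, pow_add, pow_mul, h.pow_x, one_pow, one_mul]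
  exact (mul_inv_eq_iff_eq_mul.1 hconj).symm

theorem exists_mul_eq (h : IsMetacyclicPair p c x y) :
    ∃ z, y * x = x * y * z ∧ Commute z x ∧ Commute z y ∧ z ^ p = 1 := by
  have hzy : Commute ((x ^ p) ^ c) y := h.commute_pow_x_y.pow_left _
  refine ⟨(x ^ p) ^ c, ?_, ((Commute.refl x).pow_left p).pow_left _, hzy, ?_⟩
  · rw [mul_assoc, ← hzy.eq, ← mul_assoc, ← pow_mul, ← pow_succ', ← h.conj,
      inv_mul_cancel_right]
  · rw [pow_right_comm, ← pow_mul x, ← sq, h.pow_x, one_pow]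

theorem x_mul_pow_y_pow (h : IsMetacyclicPair p c x y) (hp : p.Prime) (hodd : Odd p) (m : ℕ) :
    (x * y ^ m) ^ p = x ^ p * (y ^ m) ^ p := by
  obtain ⟨z, hyx, hzx, hzy, hz⟩ := h.exists_mul_eq
  refine mul_pow_prime_of_pow_eq_one hp hodd (pow_mul_eq_mul_pow_mul_pow hyx hzy m)
    (hzx.pow_left m) (hzy.pow_pow m m) ?_
  rw [pow_right_comm, hz, one_pow]

theorem componentGenerator_pow (h : IsMetacyclicPair p c x y) (hp : p.Prime) (hodd : Odd p)
    (i : ℕ) (k : Option (Fin p)) :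
    componentGenerator x y i k ^ p = lineGenerator (x ^ p) (y ^ p) k := by
  cases k with
  | none =>
    rw [componentGenerator, lineGenerator, pow_mul, (h.commute_pow_x_y.pow_left i).mul_pow,
      pow_right_comm, ← pow_mul x, ← sq, h.pow_x, one_pow, one_mul]
  | some j =>
    rw [componentGenerator, lineGenerator, h.x_mul_pow_y_pow hp hodd, pow_right_comm, pow_add,
      pow_mul, ← pow_mul y p p, ← sq, h.pow_y, one_pow, mul_one]

theorem componentGenerator_pow_mem (h : IsMetacyclicPair p c x y) (hp : p.Prime) (hodd : Odd p)
    (i : ℕ) (k : Option (Fin p)) :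
    componentGenerator x y i k ^ p ∈ zpowers (x ^ p) ⊔ zpowers (y ^ p) :=
  h.componentGenerator_pow hp hodd i k ▸ lineGenerator_mem_sup k

section Finite

variable [Finite G]

theorem orderOf_eq_and_disjoint (h : IsMetacyclicPair p c x y) :
    orderOf y = p ^ 2 ∧ orderOf x = p ^ 2 ∧ Disjoint (zpowers y) (zpowers x) := by
  refine orderOf_eq_and_disjoint_of_closure_pair_eq_top h.pow_y h.pow_x ?_ ?_ ?_
  · rw [h.conj]
    exact npow_mem_zpowers x _
  · rw [Set.pair_comm, h.closure_eq_top]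
  · rw [h.card_eq]
    ring

theorem orderOf_pow_x (h : IsMetacyclicPair p c x y) (hp : p ≠ 0) : orderOf (x ^ p) = p :=
  orderOf_pow_of_orderOf_eq_mul hp (h.orderOf_eq_and_disjoint.2.1.trans (sq p))

theorem orderOf_pow_y (h : IsMetacyclicPair p c x y) (hp : p ≠ 0) : orderOf (y ^ p) = p :=
  orderOf_pow_of_orderOf_eq_mul hp (h.orderOf_eq_and_disjoint.1.trans (sq p))

theorem disjoint_zpowers_pow (h : IsMetacyclicPair p c x y) :
    Disjoint (zpowers (x ^ p)) (zpowers (y ^ p)) :=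
  h.orderOf_eq_and_disjoint.2.2.symm.mono (zpowers_le.2 (npow_mem_zpowers x p))
    (zpowers_le.2 (npow_mem_zpowers y p))

theorem pow_eq_one_of_mem_core (h : IsMetacyclicPair p c x y) {g : G}
    (hg : g ∈ zpowers (x ^ p) ⊔ zpowers (y ^ p)) : g ^ p = 1 := by
  refine pow_eq_one_of_mem_zpowers_sup (h.commute_pow_x_y.pow_right p) ?_ ?_ hg
  · rw [← pow_mul, ← sq, h.pow_x]
  · rw [← pow_mul, ← sq, h.pow_y]

theorem orderOf_componentGenerator (h : IsMetacyclicPair p c x y) (hp : p.Prime) (hodd : Odd p)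
    (i : ℕ) (k : Option (Fin p)) : orderOf (componentGenerator x y i k) = p ^ 2 := by
  have : Fact p.Prime := ⟨hp⟩
  have hx : x ^ p ≠ 1 := fun hx => hp.ne_one (by rw [← h.orderOf_pow_x hp.ne_zero, hx, orderOf_one])
  have hy : y ^ p ≠ 1 := fun hy => hp.ne_one (by rw [← h.orderOf_pow_y hp.ne_zero, hy, orderOf_one])
  refine orderOf_eq_prime_pow (n := 1) ?_ ?_
  · rw [pow_one, h.componentGenerator_pow hp hodd]
    exact lineGenerator_ne_one h.disjoint_zpowers_pow hx hy k
  · rw [one_add_one_eq_two, sq, pow_mul]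
    exact h.pow_eq_one_of_mem_core (h.componentGenerator_pow_mem hp hodd i k)

theorem zpowers_componentGenerator_inf_core (h : IsMetacyclicPair p c x y) (hp : p.Prime)
    (hodd : Odd p) (i : ℕ) (k : Option (Fin p)) :
    zpowers (componentGenerator x y i k) ⊓ (zpowers (x ^ p) ⊔ zpowers (y ^ p)) =
      zpowers (lineGenerator (x ^ p) (y ^ p) k) := by
  rw [← h.componentGenerator_pow hp hodd i]
  exact zpowers_inf_eq_zpowers_pow hp.ne_zero
    ((h.orderOf_componentGenerator hp hodd i k).trans (sq p))
    (h.componentGenerator_pow_mem hp hodd i k) fun g => h.pow_eq_one_of_mem_core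

theorem isPCPThrough (h : IsMetacyclicPair p c x y) (hp : p.Prime) (hodd : Odd p) (i : ℕ) :
    IsPCPThrough (fun k : Option (Fin p) => zpowers (componentGenerator x y i k))
      (zpowers (x ^ p) ⊔ zpowers (y ^ p)) p := by
  have hcomm : Commute (x ^ p) (y ^ p) := h.commute_pow_x_y.pow_right p
  have hdis := h.disjoint_zpowers_pow
  have hx := h.orderOf_pow_x hp.ne_zero
  have hy := h.orderOf_pow_y hp.ne_zero
  refine isPCPThrough_zpowers h.card_eq (by simp) ?_ (fun g => h.pow_eq_one_of_mem_core)
    (h.orderOf_componentGenerator hp hodd i) (h.componentGenerator_pow_mem hp hodd i) ?_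
  · rw [card_zpowers_sup hcomm hdis, hx, hy, sq]
  · simp only [h.componentGenerator_pow hp hodd]
    exact pairwise_disjoint_zpowers_lineGenerator hp hcomm hdis hx hy

end Finite

theorem coe_Phat [Fintype G] [DecidableEq G] (h : IsMetacyclicPair p c x y) (hp : p.Prime)
    (hodd : Odd p) (i : ℕ) :
    (Phat x y p i : Set G) =
      (⋃ k : Option (Fin p), (zpowers (componentGenerator x y i k) : Set G)) \
        (zpowers (x ^ p) ⊔ zpowers (y ^ p) : Subgroup G) := by
  have hdiff (k : Option (Fin p)) : (zpowers (componentGenerator x y i k) : Set G) \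
      (zpowers (x ^ p) ⊔ zpowers (y ^ p) : Subgroup G) =
        ↑(zpowers (componentGenerator x y i k)) \ ↑(zpowers (lineGenerator (x ^ p) (y ^ p) k)) := by
    rw [← h.zpowers_componentGenerator_inf_core hp hodd i, coe_inf, Set.sdiff_self_inter]
  simp only [Set.iUnion_sdiff, hdiff]
  ext g
  simp [Phat, zpFinset, componentGenerator, lineGenerator, Fin.exists_iff, Option.exists, pow_mul,
    or_comm]

end IsMetacyclicPair

theorem stmt14_general (p : ℕ) (hp : p.Prime) (hodd : Odd p)
    (G : Type*) [Group G] [Fintype G] [DecidableEq G] (x y : G)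
    (hx : x ^ (p ^ 2) = 1) (hy : y ^ (p ^ 2) = 1)
    (c : ℕ) (hconj : y * x * y⁻¹ = x ^ (p * c + 1))
    (hgen : Subgroup.closure ({x, y} : Set G) = ⊤)
    (hcard : Fintype.card G = p ^ 4) (i : ℕ) :
    IsRegularPDS (Phat x y p i)
      ((p : ℤ) ^ 4) ((p : ℤ) ^ 3 - (p : ℤ)) (2 * (p : ℤ) ^ 2 - 3 * (p : ℤ))
      ((p : ℤ) ^ 2 - (p : ℤ)) := by
  have h : IsMetacyclicPair p c x y :=
    ⟨hx, hy, hconj, hgen, Nat.card_eq_fintype_card.trans hcard⟩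
  exact (h.isPCPThrough hp hodd i).isRegularPDS (h.coe_Phat hp hodd i)

/-- in `Ĝ = ⟨x,y : x^{p²} = y^{p²} = 1, yxy⁻¹ = x^{p²−p+1}⟩` (axiomatized as a
group of order `p⁴` generated by two such elements), for `1 ≤ i ≤ p−1` the set `P̂ᵢ` is a
regular `(p⁴, p³−p, 2p²−3p, p²−p)`-partial difference set. -/
theorem stmt14 (p : ℕ) (hp : p.Prime) (hodd : Odd p)
    (G : Type*) [Group G] [Fintype G] [DecidableEq G] (x y : G)
    (hx : x ^ (p ^ 2) = 1) (hy : y ^ (p ^ 2) = 1)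
    (hconj : y * x * y⁻¹ = x ^ (p ^ 2 - p + 1))
    (hgen : Subgroup.closure ({x, y} : Set G) = ⊤)
    (hcard : Fintype.card G = p ^ 4)
    (i : ℕ) (hi1 : 1 ≤ i) (hi2 : i ≤ p - 1) :
    IsRegularPDS (Phat x y p i)
      ((p : ℤ) ^ 4) ((p : ℤ) ^ 3 - (p : ℤ)) (2 * (p : ℤ) ^ 2 - 3 * (p : ℤ))
      ((p : ℤ) ^ 2 - (p : ℤ)) := by
  refine stmt14_general p hp hodd G x y hx hy (p - 1) ?_ hgen hcard i
  rw [hconj, sq, Nat.mul_sub_one]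
end
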